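/- arXiv:0811.0654 — 2 statements merged into one kernel-verified Lean document; each statement's English description precedes it below -/
import Mathlib

section
/- (Dyson's rank conjecture modulo 7, proved by Atkin and Swinnerton-Dyer) For every natural number k and every integer m with 0 ≤ m ≤ 6, the number of partitions of 7k + 5 whose rank is congruent to m modulo 7 equals p(7k + 5)/7, i.e. N(0, 7, 7k+5) = N(1, 7, 7k+5) = ... = N(6, 7, 7k+5). -/
/-! As in the approach of Atkin and Swinnerton-Dyer, the generating function of a rank class is
dissected modulo `7`, and the part with exponents `5` modulo `7` is seen to be one seventh of that
of the partition function.

*Rank series.* Removing the first column of a partition and adding a new largest part gives a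
recursion for the number of partitions of bounded rank (`rankLe_add`). Solving it yields both Euler's
pentagonal number theorem (`Pg_mul_full`) and the generating function of the class of rank `i` modulo
`7`, which is the partition series times the difference of two values of
`full b = ∑ (-1) ^ n q ^ (n (3 n + 1) / 2 + b n) / (1 - q ^ (7 n))`, a bilateral series without the
polar term `n = 0` (`Rg_eq`).

*Theta-weighted partial fractions.* Splitting `n` modulo `7` expresses each such series through the
series `app` in `Q = q ^ 7` (`full_eq`). Summing the partial fraction identities `pf_one`, `pf_geo` and
`pf_geo_zero` over `ℤ³` with theta weights gives linear relations between these series (`line_one`,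
`line_geo`, `line_geo_zero`), whose coefficients are products of the three theta values
`X, Y, Z = lam Q 1, lam Q 2, lam Q 3`. The same relations contain the `7`-dissection of Euler's product
(`euler_dissect`) and the cubic relation `X³ Z² - X² Y³ - Q Y² Z³ = 0` (`klein_of`).

*Dissection of the rank series.* The relations reduce the components of `full b` to a single `app` and
the logarithmic derivatives `dlam / lam`, which a further pair of relations evaluates
(`delta4`, `delta5`, `delta6`). The outcome is that `full b` is the constant `(b - 3) / 7` plus Euler's
product times a series with no exponents `5` modulo `7` (`full_form4`, `full_form5`, `full_form6`); the
symmetry `full_antisymm` supplies the other values of `b` (`full_missing`).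

*Coefficients.* After division by Euler's product, the class of rank `i` has the generating function
`1 / 7` of the partition series up to a series with no exponents `5` modulo `7`. Averaging over the
seventh roots of unity and uniqueness of power series coefficients prove the claim for `1 ≤ i ≤ 6`
(`rank_class`); it suffices to do so for small `q ≠ 0`, where no denominator vanishes
(`denominators_ne_zero`). The class `0` follows by subtraction (`sum_rankCountMod`).
-/

/-- `p n` is the number of partitions of `n`. -/
def partitionCount (n : ℕ) : ℕ := Fintype.card (Nat.Partition n)

/-- The rank of a partition: its largest part minus the number of its parts. -/
def Nat.Partition.rank {n : ℕ} (π : n.Partition) : ℤ :=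
  (π.parts.sup : ℤ) - (π.parts.card : ℤ)

/-- `N m k`: the number of partitions of `k` with rank `m`. -/
def rankCount (m : ℤ) (k : ℕ) : ℕ :=
  Fintype.card {π : k.Partition // π.rank = m}

/-- `N m q k`: the number of partitions of `k` whose rank is congruent to `m` mod `q`. -/
def rankCountMod (m : ℤ) (q : ℕ) (k : ℕ) : ℕ :=
  Fintype.card {π : k.Partition // π.rank ≡ m [ZMOD q]}

/-! ### Bilateral theta-weighted Lambert series -/

/-- The triangular number `n (n + 1) / 2`, for `n ∈ ℤ`; the division is exact. -/
def tri (n : ℤ) : ℤ := n * (n + 1) / 2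

theorem two_tri (n : ℤ) : 2 * tri n = n * (n + 1) :=
  Int.mul_ediv_cancel' (Int.even_mul_succ_self n).two_dvd

noncomputable section

/-- The simple fraction `1 / (1 - Q ^ k)`. The value `0` that division by zero gives at the pole
`k = 0` is used on purpose: sums over `k` of multiples of `geo Q k` leave out the polar term. -/
def geo (Q : ℂ) (k : ℤ) : ℂ := (1 - Q ^ k)⁻¹

/-- The weight `(-1) ^ n Q ^ (7 n (n + 1) / 2)`, the general term of a theta series in `Q ^ 7`. -/
def th (Q : ℂ) (n : ℤ) : ℂ := (-1) ^ n * Q ^ (7 * tri n)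

/-- The Lambert series `∑ (-1) ^ n Q ^ (7 n (n + 1) / 2) / (1 - Q ^ (7 n + r))` over `n ∈ ℤ`.
Up to a factor depending on `Q ^ 7` alone it is the reciprocal of the theta product with zeros at
the exponents `± r` modulo `7`, but only the functional equations in `r` are needed. If `7 ∣ r`,
the polar term is left out. -/
def lam (Q : ℂ) (r : ℤ) : ℂ := ∑' n : ℤ, th Q n * geo Q (7 * n + r)

/-- The derivative `x d/dx` of `∑ (-1) ^ n Q ^ (7 n (n + 1) / 2) / (1 - x Q ^ (7 n))` at
`x = Q ^ r`. -/
def dlam (Q : ℂ) (r : ℤ) : ℂ :=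
  ∑' n : ℤ, th Q n * (Q ^ (7 * n + r) * geo Q (7 * n + r) ^ 2)

/-- The component of a level-three series on a residue class: its `m`-th term is `A (7 m + r)`
times `(-1) ^ m Q ^ (21 m (m + 1) / 2 + (3 r - s) m)`. With `A = 1` it is a theta series, and with
`A = geo Q` an Appell series. The parameter `s` is the sum of three residues when the series comes
from a sum over `ℤ³`. -/
def app (Q : ℂ) (A : ℤ → ℂ) (r s : ℤ) : ℂ :=
  ∑' m : ℤ, (-1) ^ m * Q ^ (21 * tri m + (3 * r - s) * m) * A (7 * m + r)

theorem norm_neg_one_zpow (n : ℤ) : ‖(-1 : ℂ) ^ n‖ = 1 := by simp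

theorem summable_zpow_of_le {x : ℝ} (h0 : 0 < x) (h1 : x < 1) (e : ℤ → ℤ) (C : ℤ)
    (he : ∀ n, |n| - C ≤ e n) : Summable fun n => x ^ (e n) := by
  have hs : Summable fun n : ℤ => x ^ (|n| : ℤ) := by
    refine Summable.of_nat_of_neg ?_ ?_
    · simpa using summable_geometric_of_lt_one h0.le h1
    · simpa using summable_geometric_of_lt_one h0.le h1
  refine Summable.of_nonneg_of_le (fun n => (zpow_pos h0 _).le) (fun n => ?_)
    (hs.mul_left (x ^ (-C)))
  rw [← zpow_add₀ h0.ne']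
  exact zpow_le_zpow_right_of_le_one₀ h0 h1.le (by linarith [he n])

theorem summable_th {Q : ℂ} (h0 : Q ≠ 0) (h1 : ‖Q‖ < 1) : Summable fun n => ‖th Q n‖ := by
  have hn : ∀ n, ‖th Q n‖ = ‖Q‖ ^ (7 * tri n) := fun n => by simp [th]
  simp only [hn]
  refine summable_zpow_of_le (norm_pos_iff.2 h0) h1 _ 1 (fun n => ?_)
  have := two_tri n
  rcases abs_cases n with ⟨h, h'⟩ | ⟨h, h'⟩ <;> rw [h] <;> nlinarith

theorem norm_geo_le {Q : ℂ} (h0 : Q ≠ 0) (h1 : ‖Q‖ < 1) (k : ℤ) :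
    ‖geo Q k‖ ≤ (1 - ‖Q‖)⁻¹ := by
  have hQ := norm_pos_iff.2 h0
  rcases lt_trichotomy k 0 with hk | rfl | hk
  · rw [geo, norm_inv]
    apply inv_anti₀ (by linarith)
    have h2 : ‖Q‖⁻¹ ≤ ‖Q ^ k‖ := by
      rw [norm_zpow, ← zpow_neg_one]
      exact zpow_le_zpow_right_of_le_one₀ hQ h1.le (by omega)
    have h3 : ‖Q ^ k‖ - ‖(1:ℂ)‖ ≤ ‖1 - Q ^ k‖ := by
      rw [norm_sub_rev]; exact norm_sub_norm_le _ _
    have h4 : 1 ≤ ‖Q‖⁻¹ := (one_le_inv₀ hQ).2 h1.le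
    have h5 : 1 - ‖Q‖ ≤ ‖Q‖⁻¹ - 1 := by
      have : ‖Q‖ * ‖Q‖⁻¹ = 1 := mul_inv_cancel₀ hQ.ne'
      nlinarith
    rw [norm_one] at h3
    linarith
  · simp [geo]; linarith
  · rw [geo, norm_inv]
    apply inv_anti₀ (by linarith)
    have h2 : ‖Q ^ k‖ ≤ ‖Q‖ := by
      rw [norm_zpow]
      calc ‖Q‖ ^ k ≤ ‖Q‖ ^ (1:ℤ) := zpow_le_zpow_right_of_le_one₀ hQ h1.le (by omega)
        _ = ‖Q‖ := zpow_one _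
    have h3 : ‖(1:ℂ)‖ - ‖Q ^ k‖ ≤ ‖1 - Q ^ k‖ := norm_sub_norm_le _ _
    rw [norm_one] at h3
    linarith

theorem one_sub_zpow_ne_zero {Q : ℂ} (h0 : Q ≠ 0) (h1 : ‖Q‖ < 1) {k : ℤ} (hk : k ≠ 0) :
    1 - Q ^ k ≠ 0 := by
  intro h
  have h2 : ‖Q‖ ^ k = 1 := by
    rw [← norm_zpow, ← sub_eq_zero.1 h, norm_one]
  rw [zpow_eq_one_iff_right₀ (norm_nonneg _) (by linarith)] at h2
  exact hk h2

theorem geo_neg {Q : ℂ} (h0 : Q ≠ 0) (h1 : ‖Q‖ < 1) (k : ℤ) :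
    geo Q (-k) = -(Q ^ k * geo Q k) := by
  by_cases hk : k = 0
  · simp [geo, hk]
  have h2 := one_sub_zpow_ne_zero h0 h1 hk
  have h3 := one_sub_zpow_ne_zero h0 h1 (neg_ne_zero.2 hk)
  have h4 : Q ^ k ≠ 0 := zpow_ne_zero _ h0
  have h5 : Q ^ (-k) * Q ^ k = 1 := by rw [zpow_neg, inv_mul_cancel₀ h4]
  simp only [geo]
  field_simp
  linear_combination -h5

theorem geo_sq {Q : ℂ} (h0 : Q ≠ 0) (h1 : ‖Q‖ < 1) (k : ℤ) :
    geo Q k ^ 2 = geo Q k + Q ^ k * geo Q k ^ 2 := by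
  by_cases hk : k = 0
  · simp [geo, hk]
  have h2 := one_sub_zpow_ne_zero h0 h1 hk
  simp only [geo]
  field_simp
  ring

theorem tri_sub_one (n : ℤ) : tri (n - 1) = tri n - n := by
  have := two_tri n; have := two_tri (n-1); linarith
theorem tri_neg (n : ℤ) : tri (-n) = tri n - n := by
  have := two_tri n; have := two_tri (-n); linarith
theorem tri_neg_one_sub (n : ℤ) : tri (-1-n) = tri n := by
  have := two_tri n; have := two_tri (-1-n); linarith

theorem th_sub_one {Q : ℂ} (h0 : Q ≠ 0) (n : ℤ) : th Q (n - 1) = -(th Q n * Q ^ (-7 * n)) := by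
  rw [th, th, tri_sub_one, zpow_sub_one₀ (by norm_num),
    show 7 * (tri n - n) = 7 * tri n + -7 * n by ring, zpow_add₀ h0]
  norm_num
  ring

theorem th_neg {Q : ℂ} (h0 : Q ≠ 0) (n : ℤ) : th Q (-n) = th Q n * Q ^ (-7 * n) := by
  rw [th, th, tri_neg, mul_assoc, ← zpow_add₀ h0]
  rw [show 7 * (tri n - n) = 7 * tri n + -7 * n by ring, zpow_neg, ← inv_zpow]
  norm_num

/-- The reflection `n ↦ -1 - n` changes the sign of the weight, so the weights sum to zero. This is
what makes constants disappear from the relations below. -/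
theorem tsum_th {Q : ℂ} : ∑' n, th Q n = 0 := by
  have h := (Equiv.subLeft (-1 : ℤ)).tsum_eq (th Q)
  have h2 : ∀ n : ℤ, th Q (Equiv.subLeft (-1 : ℤ) n) = - th Q n := by
    intro n
    simp only [Equiv.subLeft_apply, th, tri_neg_one_sub]
    rw [zpow_sub₀ (by norm_num), div_eq_mul_inv, ← inv_zpow]; norm_num
  simp only [h2, tsum_neg] at h
  linear_combination (-1/2) * h

theorem tsum_th_mul {Q : ℂ} (h0 : Q ≠ 0) : ∑' n, th Q n * Q ^ (-7 * n) = 0 := by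
  have h := (Equiv.subRight (1 : ℤ)).tsum_eq (th Q)
  simp only [Equiv.subRight_apply, th_sub_one h0, tsum_neg, tsum_th] at h
  simpa using h

theorem summable_th_mul {Q : ℂ} (h0 : Q ≠ 0) (h1 : ‖Q‖ < 1) {f : ℤ → ℂ} {C : ℝ}
    (hf : ∀ n, ‖f n‖ ≤ C) : Summable fun n => th Q n * f n := by
  refine Summable.of_norm_bounded ((summable_th h0 h1).mul_right C) (fun n => ?_)
  rw [norm_mul]
  exact mul_le_mul_of_nonneg_left (hf n) (norm_nonneg _)

theorem norm_sq_geo_le {Q : ℂ} (h0 : Q ≠ 0) (h1 : ‖Q‖ < 1) (k : ℤ) :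
    ‖Q ^ k * geo Q k ^ 2‖ ≤ (1 - ‖Q‖)⁻¹ * (1 - ‖Q‖)⁻¹ := by
  have h : Q ^ k * geo Q k ^ 2 = -(geo Q (-k) * geo Q k) := by rw [geo_neg h0 h1]; ring
  rw [h, norm_neg, norm_mul]
  have := norm_geo_le h0 h1 k
  have := norm_geo_le h0 h1 (-k)
  gcongr

/-- Shifting the index by one turns `1 / (1 - x)` into `x / (1 - x) = 1 / (1 - x) - 1`, and the
constant contributes `∑ th = 0`. -/
theorem lam_add {Q : ℂ} (h0 : Q ≠ 0) (h1 : ‖Q‖ < 1) {r : ℤ} (hr : ∀ n, 7 * n + r ≠ 0) :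
    lam Q (r + 7) = -(Q ^ r * lam Q r) := by
  have h := (Equiv.subRight (1 : ℤ)).tsum_eq (fun n => th Q n * geo Q (7 * n + (r + 7)))
  have hs : Summable fun n => th Q n * geo Q (7 * n + r) :=
    summable_th_mul h0 h1 (f := fun n => geo Q (7 * n + r)) (fun n => norm_geo_le h0 h1 _)
  have hs2 : Summable fun n => th Q n * Q ^ (-7 * n) := by
    have := (((Equiv.subRight (1:ℤ)).summable_iff).2 (summable_th h0 h1).of_norm).neg
    refine this.congr (fun n => ?_)
    simp only [Function.comp_apply, Equiv.subRight_apply, th_sub_one h0, neg_neg]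
  have hc : ∀ n, th Q ((Equiv.subRight (1:ℤ)) n) *
        geo Q (7 * ((Equiv.subRight (1:ℤ)) n) + (r + 7)) =
      -Q ^ r * (th Q n * geo Q (7 * n + r)) + -1 * (th Q n * Q ^ (-7 * n)) := by
    intro n
    simp only [Equiv.subRight_apply, th_sub_one h0]
    have h2 := one_sub_zpow_ne_zero h0 h1 (hr n)
    rw [show 7 * (n - 1) + (r + 7) = 7 * n + r by ring]
    have h4 : Q ^ (-7 * n) * Q ^ (7 * n + r) = Q ^ r := by
      rw [← zpow_add₀ h0]; congr 1; ring
    have h6 : geo Q (7 * n + r) * (1 - Q ^ (7 * n + r)) = 1 := inv_mul_cancel₀ h2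
    linear_combination (-th Q n * geo Q (7*n+r)) * h4 - (th Q n * Q ^ (-7*n)) * h6
  rw [tsum_congr hc, (hs.mul_left _).tsum_add (hs2.mul_left _), tsum_mul_left, tsum_mul_left,
    tsum_th_mul h0] at h
  rw [lam, ← h, lam]
  ring

theorem lam_neg {Q : ℂ} (h0 : Q ≠ 0) (h1 : ‖Q‖ < 1) (r : ℤ) :
    lam Q (-r) = -(Q ^ r * lam Q r) := by
  have h := (Equiv.neg ℤ).tsum_eq (fun n => th Q n * geo Q (7 * n + (-r)))
  rw [lam, ← h, lam, ← tsum_mul_left, ← tsum_neg]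
  refine tsum_congr fun n => ?_
  simp only [Equiv.neg_apply, th_neg h0]
  rw [show 7 * -n + -r = -(7 * n + r) by ring, geo_neg h0 h1]
  have h4 : Q ^ (-7 * n) * Q ^ (7 * n + r) = Q ^ r := by
    rw [← zpow_add₀ h0]; congr 1; ring
  linear_combination -th Q n * geo Q (7*n+r) * h4

theorem dlam_neg {Q : ℂ} (h0 : Q ≠ 0) (h1 : ‖Q‖ < 1) (r : ℤ) :
    dlam Q (-r) = Q ^ r * (lam Q r + dlam Q r) := by
  have h := (Equiv.neg ℤ).tsum_eq
    (fun n => th Q n * (Q ^ (7 * n + -r) * geo Q (7 * n + -r) ^ 2))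
  have hs := summable_th_mul h0 h1 (fun n => norm_geo_le h0 h1 (7 * n + r))
  have hs' := summable_th_mul h0 h1 (fun n => norm_sq_geo_le h0 h1 (7 * n + r))
  rw [dlam, ← h, lam, dlam, ← hs.tsum_add hs', ← tsum_mul_left]
  refine tsum_congr fun n => ?_
  simp only [Equiv.neg_apply, th_neg h0]
  rw [show 7 * -n + -r = -(7 * n + r) by ring, geo_neg h0 h1, ← mul_add, ← geo_sq h0 h1]
  have h4 : Q ^ (-7 * n) * Q ^ (7 * n + r) = Q ^ r := by
    rw [← zpow_add₀ h0]; congr 1; ring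
  have h5 : Q ^ (-(7 * n + r)) * Q ^ (7 * n + r) = 1 := by rw [← zpow_add₀ h0]; simp
  linear_combination (th Q n * Q ^ (-7 * n) * Q ^ (7*n+r) * geo Q (7*n+r)^2) * h5
    + th Q n * geo Q (7*n+r)^2 * h4

theorem dlam_add {Q : ℂ} (h0 : Q ≠ 0) (h1 : ‖Q‖ < 1) (r : ℤ) :
    dlam Q (r + 7) = -(Q ^ r * (lam Q r + dlam Q r)) := by
  have h := (Equiv.subRight (1:ℤ)).tsum_eq
    (fun n => th Q n * (Q ^ (7 * n + (r+7)) * geo Q (7 * n + (r+7)) ^ 2))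
  have hs := summable_th_mul h0 h1 (fun n => norm_geo_le h0 h1 (7 * n + r))
  have hs' := summable_th_mul h0 h1 (fun n => norm_sq_geo_le h0 h1 (7 * n + r))
  rw [dlam, ← h, lam, dlam, ← hs.tsum_add hs', ← tsum_mul_left, ← tsum_neg]
  refine tsum_congr fun n => ?_
  simp only [Equiv.subRight_apply, th_sub_one h0]
  rw [show 7 * (n-1) + (r+7) = (7 * n + r) by ring, ← mul_add, ← geo_sq h0 h1]
  have h4 : Q ^ (-7 * n) * Q ^ (7 * n + r) = Q ^ r := by
    rw [← zpow_add₀ h0]; congr 1; ring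
  linear_combination - th Q n * geo Q (7*n+r)^2 * h4

/-- The iterated form of `lam_add`, for `m` of either sign. -/
theorem lam_sub_mul {Q : ℂ} (h0 : Q ≠ 0) (h1 : ‖Q‖ < 1) {r : ℤ} (hr : ∀ n, 7 * n + r ≠ 0)
    (m : ℤ) : lam Q (r - 7 * m) = (-1) ^ m * Q ^ (7 * tri m - r * m) * lam Q r := by
  have key : ∀ m : ℤ, lam Q (r - 7 * m) =
      -(Q ^ (r - 7 * (m + 1)) * lam Q (r - 7 * (m + 1))) := by
    intro m
    rw [← lam_add h0 h1 (fun n => by have := hr (n - (m+1)); intro h; apply this; linarith)]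
    congr 1; ring
  induction m using Int.induction_on with
  | zero => simp [tri]
  | succ i ih =>
    have h := key i
    rw [ih] at h
    have e : 7 * tri (i + 1) - r * (i + 1) = (7 * tri i - r * i) + -(r - 7 * (i + 1)) := by
      have := two_tri i; have := two_tri (i+1); linarith
    have h5 : Q ^ (-(r - 7 * ((i:ℤ) + 1))) * Q ^ (r - 7 * ((i:ℤ) + 1)) = 1 := by
      rw [← zpow_add₀ h0]; simp
    rw [e, zpow_add₀ h0, zpow_add_one₀ (by norm_num)]
    linear_combination (Q ^ (-(r - 7 * ((i:ℤ) + 1)))) * h - lam Q (r - 7 * (i+1)) * h5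
  | pred i ih =>
    have h := key (-i - 1)
    rw [sub_add_cancel, ih] at h
    rw [h]
    have e : 7 * tri (-i - 1) - r * (-i - 1) = (r - 7 * -i) + (7 * tri (-i) - r * -i)  := by
      have := two_tri (-i); have := two_tri (-i-1); linarith
    rw [e, zpow_add₀ h0 (r - 7 * -(i:ℤ)), zpow_sub_one₀ (by norm_num)]
    ring

end

/-! ### Three-term products of Lambert series -/

noncomputable section

/-- Absolutely convergent triple sum over `ℤ³` with the weights `th`. -/
def triple (Q : ℂ) (φ : ℤ → ℤ → ℤ → ℂ) : ℂ :=
  ∑' x : ℤ × ℤ × ℤ, th Q x.1 * (th Q x.2.1 * th Q x.2.2) * φ x.1 x.2.1 x.2.2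

theorem summable_triple {Q : ℂ} (h0 : Q ≠ 0) (h1 : ‖Q‖ < 1) {φ : ℤ → ℤ → ℤ → ℂ} {C : ℝ}
    (hφ : ∀ a b c, ‖φ a b c‖ ≤ C) : Summable fun x : ℤ × ℤ × ℤ =>
      th Q x.1 * (th Q x.2.1 * th Q x.2.2) * φ x.1 x.2.1 x.2.2 := by
  have h := summable_th h0 h1
  have h2 : Summable fun x : ℤ × ℤ => ‖th Q x.1‖ * ‖th Q x.2‖ :=
    h.mul_of_nonneg h (fun _ => norm_nonneg _) (fun _ => norm_nonneg _)
  have h3 : Summable fun x : ℤ × ℤ × ℤ => ‖th Q x.1‖ * (‖th Q x.2.1‖ * ‖th Q x.2.2‖) :=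
    h.mul_of_nonneg h2 (fun _ => norm_nonneg _) (fun _ => by positivity)
  refine Summable.of_norm_bounded (h3.mul_right C) (fun x => ?_)
  rw [norm_mul, norm_mul, norm_mul]
  exact mul_le_mul_of_nonneg_left (hφ _ _ _) (by positivity)

theorem triple_rotate {Q : ℂ} (φ : ℤ → ℤ → ℤ → ℂ) :
    triple Q φ = triple Q (fun a b c => φ c a b) := by
  let e : ℤ × ℤ × ℤ ≃ ℤ × ℤ × ℤ :=
    { toFun := fun x => (x.2.2, x.1, x.2.1)
      invFun := fun x => (x.2.1, x.2.2, x.1)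
      left_inv := fun _ => rfl
      right_inv := fun _ => rfl }
  rw [triple, triple, ← e.tsum_eq]
  refine tsum_congr fun x => ?_
  simp only [e, Equiv.coe_fn_mk]
  ring

theorem triple_congr {Q : ℂ} {φ ψ : ℤ → ℤ → ℤ → ℂ} (h : ∀ a b c, φ a b c = ψ a b c) :
    triple Q φ = triple Q ψ := by
  simp only [triple, h]

theorem triple_add {Q : ℂ} (h0 : Q ≠ 0) (h1 : ‖Q‖ < 1) {φ ψ : ℤ → ℤ → ℤ → ℂ} {C D : ℝ}
    (hφ : ∀ a b c, ‖φ a b c‖ ≤ C) (hψ : ∀ a b c, ‖ψ a b c‖ ≤ D) :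
    triple Q (fun a b c => φ a b c + ψ a b c) = triple Q φ + triple Q ψ := by
  rw [triple, triple, triple, ← (summable_triple h0 h1 hφ).tsum_add (summable_triple h0 h1 hψ)]
  exact tsum_congr fun x => by ring

/-- For fixed first index the sum over the other two splits into a product. -/
theorem triple_factor {Q : ℂ} (h0 : Q ≠ 0) (h1 : ‖Q‖ < 1) {A : ℤ → ℂ} {B C : ℤ → ℤ → ℂ}
    {a b c : ℝ} (hA : ∀ l, ‖A l‖ ≤ a) (hB : ∀ l m, ‖B l m‖ ≤ b) (hC : ∀ l m, ‖C l m‖ ≤ c) :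
    triple Q (fun l m n => A l * B l m * C l n) =
      ∑' l, th Q l * A l * (∑' m, th Q m * B l m) * ∑' n, th Q n * C l n := by
  have hs := summable_triple h0 h1 (φ := fun l m n => A l * B l m * C l n) (C := a * b * c)
    (fun l m n => by
      rw [norm_mul, norm_mul]
      have := hA l; have := hB l m; have := hC l n
      have := (norm_nonneg _).trans (hA l)
      have := (norm_nonneg _).trans (hB l m)
      gcongr)
  rw [triple, hs.tsum_prod]
  refine tsum_congr fun l => ?_
  have e1 : Summable fun m => ‖th Q m * B l m‖ := by
    refine Summable.of_nonneg_of_le (fun _ => norm_nonneg _) (fun m => ?_)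
      ((summable_th h0 h1).mul_right b)
    rw [norm_mul]; exact mul_le_mul_of_nonneg_left (hB l m) (norm_nonneg _)
  have e2 : Summable fun m => ‖th Q m * C l m‖ := by
    refine Summable.of_nonneg_of_le (fun _ => norm_nonneg _) (fun m => ?_)
      ((summable_th h0 h1).mul_right c)
    rw [norm_mul]; exact mul_le_mul_of_nonneg_left (hC l m) (norm_nonneg _)
  rw [mul_assoc, tsum_mul_tsum_of_summable_norm e1 e2, ← tsum_mul_left]
  exact tsum_congr fun x => by ring

theorem geo_zero (Q : ℂ) : geo Q 0 = 0 := by simp [geo]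

theorem lam_zero {Q : ℂ} (h0 : Q ≠ 0) (h1 : ‖Q‖ < 1) : lam Q 0 = 0 := by
  have := lam_neg h0 h1 0
  simp only [neg_zero, zpow_zero, one_mul] at this
  linear_combination this / 2

/-- One of the three terms of the partial fraction identity, summed over the lattice: the sums over
`m` and `n` are shifts of `lam`, which `lam_sub_mul` reduces to constants times the exponential
factor in `l` that turns the remaining sum into `app`. -/
theorem triple_term {Q : ℂ} (h0 : Q ≠ 0) (h1 : ‖Q‖ < 1) {A : ℤ → ℂ} {a : ℝ}
    (hA : ∀ l, ‖A l‖ ≤ a) {r₁ r₂ r₃ : ℤ} (h12 : ∀ n, 7 * n + (r₂ - r₁) ≠ 0)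
    (h13 : ∀ n, 7 * n + (r₃ - r₁) ≠ 0) :
    triple Q (fun l m n => A (7 * l + r₁) * geo Q (7 * m + r₂ - (7 * l + r₁)) *
      geo Q (7 * n + r₃ - (7 * l + r₁))) =
    app Q A r₁ (r₁ + r₂ + r₃) * lam Q (r₂ - r₁) * lam Q (r₃ - r₁) := by
  rw [triple_factor h0 h1 (A := fun l => A (7 * l + r₁))
    (B := fun l m => geo Q (7 * m + r₂ - (7 * l + r₁)))
    (C := fun l n => geo Q (7 * n + r₃ - (7 * l + r₁))) (fun l => hA _)
    (fun _ _ => norm_geo_le h0 h1 _) (fun _ _ => norm_geo_le h0 h1 _), app,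
    ← tsum_mul_right, ← tsum_mul_right]
  refine tsum_congr fun l => ?_
  have e : ∀ r, ∑' m, th Q m * geo Q (7 * m + r - (7 * l + r₁)) = lam Q ((r - r₁) - 7 * l) := by
    intro r
    exact tsum_congr fun m => by congr 2; ring
  rw [e, e, lam_sub_mul h0 h1 h12, lam_sub_mul h0 h1 h13, th]
  have h4 : Q ^ (7 * tri l) * Q ^ (7 * tri l - (r₂ - r₁) * l) * Q ^ (7 * tri l - (r₃ - r₁) * l)
      = Q ^ (21 * tri l + (3 * r₁ - (r₁ + r₂ + r₃)) * l) := by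
    rw [← zpow_add₀ h0, ← zpow_add₀ h0]; congr 1; ring
  have h5 : ((-1 : ℂ) ^ l) * (-1) ^ l = 1 := by
    rw [← mul_zpow]; simp
  rw [← h4]
  linear_combination ((-1) ^ l * Q ^ (7 * tri l) * Q ^ (7 * tri l - (r₂ - r₁) * l) *
    Q ^ (7 * tri l - (r₃ - r₁) * l) * A (7 * l + r₁) * lam Q (r₂ - r₁) * lam Q (r₃ - r₁)) * h5

/-- The sum over the lattice of the cyclic partial fraction expression. -/
theorem triple_line {Q : ℂ} (h0 : Q ≠ 0) (h1 : ‖Q‖ < 1) {A : ℤ → ℂ} {a : ℝ}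
    (hA : ∀ l, ‖A l‖ ≤ a) {r₁ r₂ r₃ : ℤ} (h12 : ∀ n, 7 * n + (r₂ - r₁) ≠ 0)
    (h13 : ∀ n, 7 * n + (r₃ - r₁) ≠ 0) (h23 : ∀ n, 7 * n + (r₃ - r₂) ≠ 0)
    {φ : ℤ → ℤ → ℤ → ℂ}
    (hφ : ∀ l m n, A (7*l+r₁) * geo Q (7*m+r₂ - (7*l+r₁)) * geo Q (7*n+r₃ - (7*l+r₁)) +
        A (7*m+r₂) * geo Q (7*n+r₃ - (7*m+r₂)) * geo Q (7*l+r₁ - (7*m+r₂)) +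
        A (7*n+r₃) * geo Q (7*l+r₁ - (7*n+r₃)) * geo Q (7*m+r₂ - (7*n+r₃)) = φ l m n) :
    app Q A r₁ (r₁+r₂+r₃) * lam Q (r₂ - r₁) * lam Q (r₃ - r₁) +
    app Q A r₂ (r₁+r₂+r₃) * lam Q (r₃ - r₂) * lam Q (r₁ - r₂) +
    app Q A r₃ (r₁+r₂+r₃) * lam Q (r₁ - r₃) * lam Q (r₂ - r₃) = triple Q φ := by
  have neg : ∀ {x y : ℤ}, (∀ n, 7 * n + (x - y) ≠ 0) → ∀ n, 7 * n + (y - x) ≠ 0 := by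
    intro x y h n hn; exact h (-n) (by linarith)
  have bd : ∀ x y z : ℤ, ‖A x * geo Q y * geo Q z‖ ≤ a * (1 - ‖Q‖)⁻¹ * (1 - ‖Q‖)⁻¹ := by
    intro x y z
    rw [norm_mul, norm_mul]
    have := hA x; have := norm_geo_le h0 h1 y; have := norm_geo_le h0 h1 z
    have := (norm_nonneg _).trans (hA 0)
    have : 0 ≤ (1 - ‖Q‖)⁻¹ := inv_nonneg.2 (by linarith)
    gcongr
  have t1 := triple_term h0 h1 hA h12 h13
  have t2 := triple_term h0 h1 hA h23 (neg h12)
  have t3 := triple_term h0 h1 hA (neg h13) (neg h23)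
  have s2 := triple_rotate (Q := Q) (fun l m n =>
    A (7*m+r₂) * geo Q (7*n+r₃ - (7*m+r₂)) * geo Q (7*l+r₁ - (7*m+r₂)))
  have s3 := triple_rotate (Q := Q) (fun n l m =>
    A (7*n+r₃) * geo Q (7*l+r₁ - (7*n+r₃)) * geo Q (7*m+r₂ - (7*n+r₃)))
  rw [← triple_congr hφ, triple_add h0 h1 (D := a * (1 - ‖Q‖)⁻¹ * (1 - ‖Q‖)⁻¹)
    (C := a * (1 - ‖Q‖)⁻¹ * (1 - ‖Q‖)⁻¹ + a * (1 - ‖Q‖)⁻¹ * (1 - ‖Q‖)⁻¹)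
    (fun _ _ _ => (norm_add_le _ _).trans (add_le_add (bd _ _ _) (bd _ _ _)))
    (fun _ _ _ => bd _ _ _),
    triple_add h0 h1 (fun _ _ _ => bd _ _ _) (fun _ _ _ => bd _ _ _), t1, s2, ← s3, t2, t3,
    show r₂ + r₃ + r₁ = r₁ + r₂ + r₃ by ring, show r₃ + r₁ + r₂ = r₁ + r₂ + r₃ by ring]

theorem geo_sub {Q : ℂ} (h0 : Q ≠ 0) (h1 : ‖Q‖ < 1) {k l : ℤ} (h : k ≠ l) :
    Q ^ k - Q ^ l ≠ 0 ∧ geo Q (l - k) = Q ^ k / (Q ^ k - Q ^ l) := by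
  have h2 := one_sub_zpow_ne_zero h0 h1 (sub_ne_zero.2 h.symm)
  have h3 : Q ^ k ≠ 0 := zpow_ne_zero _ h0
  have h4 : Q ^ k - Q ^ l = Q ^ k * (1 - Q ^ (l - k)) := by
    rw [zpow_sub₀ h0]; field_simp
  have h5 : Q ^ k - Q ^ l ≠ 0 := by rw [h4]; exact mul_ne_zero h3 h2
  refine ⟨h5, ?_⟩
  rw [h4, geo]; field_simp

/-- The Lagrange interpolation identity `∑ 1 / ((1 - y / x) (1 - z / x)) = 1`, summed cyclically,
with `x = Q ^ k`, `y = Q ^ l`, `z = Q ^ j`. -/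
theorem pf_one {Q : ℂ} (h0 : Q ≠ 0) (h1 : ‖Q‖ < 1) {k l j : ℤ} (hkl : k ≠ l) (hkj : k ≠ j)
    (hlj : l ≠ j) : geo Q (l - k) * geo Q (j - k) + geo Q (j - l) * geo Q (k - l) +
      geo Q (k - j) * geo Q (l - j) = 1 := by
  obtain ⟨a1, a2⟩ := geo_sub h0 h1 hkl
  obtain ⟨b1, b2⟩ := geo_sub h0 h1 hkj
  obtain ⟨c1, c2⟩ := geo_sub h0 h1 hlj
  obtain ⟨a3, a4⟩ := geo_sub h0 h1 hkl.symm
  obtain ⟨b3, b4⟩ := geo_sub h0 h1 hkj.symm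
  obtain ⟨c3, c4⟩ := geo_sub h0 h1 hlj.symm
  rw [a2, b2, c2, a4, b4, c4, ← neg_sub (Q ^ k) (Q ^ l), ← neg_sub (Q ^ k) (Q ^ j),
    ← neg_sub (Q ^ l) (Q ^ j)]
  generalize Q ^ k = x at *
  generalize Q ^ l = y at *
  generalize Q ^ j = z at *
  field_simp
  ring

/-- The partial fraction expansion of `1 / ((1 - x) (1 - y) (1 - z))` with respect to the
differences of `x = Q ^ k`, `y = Q ^ l`, `z = Q ^ j`. -/
theorem pf_geo {Q : ℂ} (h0 : Q ≠ 0) (h1 : ‖Q‖ < 1) {k l j : ℤ} (hkl : k ≠ l) (hkj : k ≠ j)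
    (hlj : l ≠ j) (hk : k ≠ 0) (hl : l ≠ 0) (hj : j ≠ 0) :
    geo Q k * geo Q (l - k) * geo Q (j - k) + geo Q l * geo Q (j - l) * geo Q (k - l) +
      geo Q j * geo Q (k - j) * geo Q (l - j) = geo Q k * geo Q l * geo Q j := by
  obtain ⟨a1, a2⟩ := geo_sub h0 h1 hkl
  obtain ⟨b1, b2⟩ := geo_sub h0 h1 hkj
  obtain ⟨c1, c2⟩ := geo_sub h0 h1 hlj
  obtain ⟨a3, a4⟩ := geo_sub h0 h1 hkl.symm
  obtain ⟨b3, b4⟩ := geo_sub h0 h1 hkj.symm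
  obtain ⟨c3, c4⟩ := geo_sub h0 h1 hlj.symm
  have u1 := one_sub_zpow_ne_zero h0 h1 hk
  have u2 := one_sub_zpow_ne_zero h0 h1 hl
  have u3 := one_sub_zpow_ne_zero h0 h1 hj
  rw [a2, b2, c2, a4, b4, c4, ← neg_sub (Q ^ k) (Q ^ l), ← neg_sub (Q ^ k) (Q ^ j),
    ← neg_sub (Q ^ l) (Q ^ j), geo, geo, geo]
  generalize Q ^ k = x at *
  generalize Q ^ l = y at *
  generalize Q ^ j = z at *
  field_simp
  ring

/-- The degenerate partial fraction identity, where the pole at `k = 0` is left out. -/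
theorem pf_geo_zero {Q : ℂ} (h0 : Q ≠ 0) (h1 : ‖Q‖ < 1) {l j : ℤ}
    (hlj : l ≠ j) (hl : l ≠ 0) (hj : j ≠ 0) :
    geo Q l * geo Q (j - l) * geo Q (-l) + geo Q j * geo Q (-j) * geo Q (l - j) =
      -(Q ^ l * geo Q l ^ 2 * geo Q j) - Q ^ j * geo Q j ^ 2 * geo Q l := by
  obtain ⟨c1, c2⟩ := geo_sub h0 h1 hlj
  obtain ⟨c3, c4⟩ := geo_sub h0 h1 hlj.symm
  have u2 := one_sub_zpow_ne_zero h0 h1 hl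
  have u3 := one_sub_zpow_ne_zero h0 h1 hj
  rw [c2, c4, geo_neg h0 h1, geo_neg h0 h1, ← neg_sub (Q ^ l) (Q ^ j), geo, geo]
  generalize Q ^ l = y at *
  generalize Q ^ j = z at *
  field_simp
  ring

theorem triple_one {Q : ℂ} (h0 : Q ≠ 0) (h1 : ‖Q‖ < 1) : triple Q (fun _ _ _ => 1) = 0 := by
  have h := triple_factor (A := fun _ => 1) (B := fun _ _ => 1) (C := fun _ _ => 1)
    (a := 1) (b := 1) (c := 1) h0 h1 (by simp) (by simp) (by simp)
  simpa [tsum_th] using h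

/-- The sum of `pf_one` over `ℤ³`: a linear relation between three components of a theta series. -/
theorem line_one {Q : ℂ} (h0 : Q ≠ 0) (h1 : ‖Q‖ < 1) {r₁ r₂ r₃ : ℤ}
    (h12 : ∀ n, 7 * n + (r₂ - r₁) ≠ 0)
    (h13 : ∀ n, 7 * n + (r₃ - r₁) ≠ 0) (h23 : ∀ n, 7 * n + (r₃ - r₂) ≠ 0) :
    app Q (fun _ => 1) r₁ (r₁+r₂+r₃) * lam Q (r₂ - r₁) * lam Q (r₃ - r₁) +
    app Q (fun _ => 1) r₂ (r₁+r₂+r₃) * lam Q (r₃ - r₂) * lam Q (r₁ - r₂) +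
    app Q (fun _ => 1) r₃ (r₁+r₂+r₃) * lam Q (r₁ - r₃) * lam Q (r₂ - r₃) = 0 := by
  rw [← triple_one h0 h1]
  refine triple_line h0 h1 (a := 1) (by simp) h12 h13 h23 (fun l m n => ?_)
  simp only [one_mul]
  exact pf_one h0 h1 (fun h => h12 (m - l) (by linarith)) (fun h => h13 (n - l) (by linarith))
    (fun h => h23 (n - m) (by linarith))

/-- The sum of `pf_geo` over `ℤ³`: a linear relation between three Appell series. -/
theorem line_geo {Q : ℂ} (h0 : Q ≠ 0) (h1 : ‖Q‖ < 1) {r₁ r₂ r₃ : ℤ}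
    (h12 : ∀ n, 7 * n + (r₂ - r₁) ≠ 0)
    (h13 : ∀ n, 7 * n + (r₃ - r₁) ≠ 0) (h23 : ∀ n, 7 * n + (r₃ - r₂) ≠ 0)
    (k1 : ∀ n, 7 * n + r₁ ≠ 0) (k2 : ∀ n, 7 * n + r₂ ≠ 0) (k3 : ∀ n, 7 * n + r₃ ≠ 0) :
    app Q (geo Q) r₁ (r₁+r₂+r₃) * lam Q (r₂ - r₁) * lam Q (r₃ - r₁) +
    app Q (geo Q) r₂ (r₁+r₂+r₃) * lam Q (r₃ - r₂) * lam Q (r₁ - r₂) +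
    app Q (geo Q) r₃ (r₁+r₂+r₃) * lam Q (r₁ - r₃) * lam Q (r₂ - r₃) =
      lam Q r₁ * lam Q r₂ * lam Q r₃ := by
  have h := triple_factor (A := fun l => geo Q (7 * l + r₁)) (B := fun _ m => geo Q (7 * m + r₂))
    (C := fun _ n => geo Q (7 * n + r₃)) h0 h1 (fun _ => norm_geo_le h0 h1 _)
    (fun _ _ => norm_geo_le h0 h1 _) (fun _ _ => norm_geo_le h0 h1 _)
  rw [tsum_mul_right, tsum_mul_right] at h
  have h' : triple Q (fun l m n => geo Q (7 * l + r₁) * geo Q (7 * m + r₂) * geo Q (7 * n + r₃)) =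
      lam Q r₁ * lam Q r₂ * lam Q r₃ := h
  rw [← h']
  refine triple_line h0 h1 (norm_geo_le h0 h1) h12 h13 h23 (fun l m n => ?_)
  exact pf_geo h0 h1 (fun h => h12 (m - l) (by linarith)) (fun h => h13 (n - l) (by linarith))
    (fun h => h23 (n - m) (by linarith)) (k1 _) (k2 _) (k3 _)

/-- The relation `line_geo` with one residue divisible by `7`. Since `geo` omits the pole, the terms
with first index `0` follow `pf_geo_zero` instead; they contribute the derivatives `dlam`, while the
product on the right of `line_geo` vanishes because `lam Q 0 = 0`. -/
theorem line_geo_zero {Q : ℂ} (h0 : Q ≠ 0) (h1 : ‖Q‖ < 1) {r₂ r₃ : ℤ}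
    (h23 : ∀ n, 7 * n + (r₃ - r₂) ≠ 0)
    (k2 : ∀ n, 7 * n + r₂ ≠ 0) (k3 : ∀ n, 7 * n + r₃ ≠ 0) :
    app Q (geo Q) 0 (r₂+r₃) * lam Q r₂ * lam Q r₃ +
    app Q (geo Q) r₂ (r₂+r₃) * lam Q (r₃ - r₂) * lam Q (-r₂) +
    app Q (geo Q) r₃ (r₂+r₃) * lam Q (-r₃) * lam Q (r₂ - r₃) =
      -(dlam Q r₂ * lam Q r₃ + dlam Q r₃ * lam Q r₂) := by
  have bd : ∀ l : ℤ, ‖(if l = 0 then (-1 : ℂ) else 0)‖ ≤ 1 := by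
    intro l; split_ifs <;> simp
  have t1 := triple_factor (A := fun l => geo Q (7 * l + 0))
    (B := fun _ m => geo Q (7 * m + r₂))
    (C := fun _ n => geo Q (7 * n + r₃)) h0 h1 (fun _ => norm_geo_le h0 h1 _)
    (fun _ _ => norm_geo_le h0 h1 _) (fun _ _ => norm_geo_le h0 h1 _)
  have t2 := triple_factor (A := fun l => if l = 0 then (-1 : ℂ) else 0)
    (B := fun _ m => Q ^ (7 * m + r₂) * geo Q (7 * m + r₂) ^ 2)
    (C := fun _ n => geo Q (7 * n + r₃)) h0 h1 bd
    (fun _ _ => norm_sq_geo_le h0 h1 _) (fun _ _ => norm_geo_le h0 h1 _)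
  have t3 := triple_factor (A := fun l => if l = 0 then (-1 : ℂ) else 0)
    (B := fun _ m => geo Q (7 * m + r₂))
    (C := fun _ n => Q ^ (7 * n + r₃) * geo Q (7 * n + r₃) ^ 2) h0 h1 bd
    (fun _ _ => norm_geo_le h0 h1 _) (fun _ _ => norm_sq_geo_le h0 h1 _)
  have hd : ∑' l : ℤ, th Q l * (if l = 0 then (-1 : ℂ) else 0) = -1 := by
    rw [tsum_eq_single 0 (fun l hl => by simp [hl])]; simp [th, tri]
  have hl0 := lam_zero h0 h1
  rw [lam] at hl0
  rw [tsum_mul_right, tsum_mul_right, hl0] at t1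
  rw [tsum_mul_right, tsum_mul_right, hd] at t2 t3
  have inv0 : 0 ≤ (1 - ‖Q‖)⁻¹ := inv_nonneg.2 (by linarith)
  have b1 : ∀ l m n, ‖geo Q (7 * l + 0) * geo Q (7 * m + r₂) * geo Q (7 * n + r₃)‖ ≤
      (1 - ‖Q‖)⁻¹ * (1 - ‖Q‖)⁻¹ * (1 - ‖Q‖)⁻¹ := by
    intro l m n
    rw [norm_mul, norm_mul]
    have := norm_geo_le h0 h1 (7 * l + 0); have := norm_geo_le h0 h1 (7 * m + r₂)
    have := norm_geo_le h0 h1 (7 * n + r₃)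
    gcongr
  have b2 : ∀ l m n : ℤ, ‖(if l = 0 then (-1 : ℂ) else 0) *
      (Q ^ (7 * m + r₂) * geo Q (7 * m + r₂) ^ 2) * geo Q (7 * n + r₃)‖ ≤
      1 * ((1 - ‖Q‖)⁻¹ * (1 - ‖Q‖)⁻¹) * (1 - ‖Q‖)⁻¹ := by
    intro l m n
    rw [norm_mul, norm_mul]
    have := bd l; have := norm_sq_geo_le h0 h1 (7 * m + r₂)
    have := norm_geo_le h0 h1 (7 * n + r₃)
    gcongr
  have b3 : ∀ l m n : ℤ, ‖(if l = 0 then (-1 : ℂ) else 0) * geo Q (7 * m + r₂) *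
      (Q ^ (7 * n + r₃) * geo Q (7 * n + r₃) ^ 2)‖ ≤
      1 * (1 - ‖Q‖)⁻¹ * ((1 - ‖Q‖)⁻¹ * (1 - ‖Q‖)⁻¹) := by
    intro l m n
    rw [norm_mul, norm_mul]
    have := bd l; have := norm_sq_geo_le h0 h1 (7 * n + r₃)
    have := norm_geo_le h0 h1 (7 * m + r₂)
    gcongr
  have h := triple_line h0 h1 (A := geo Q) (norm_geo_le h0 h1) (r₁ := 0) (r₂ := r₂) (r₃ := r₃)
    (by simpa using k2) (by simpa using k3) h23 (φ := fun l m n =>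
      geo Q (7 * l + 0) * geo Q (7 * m + r₂) * geo Q (7 * n + r₃) +
      ((if l = 0 then (-1 : ℂ) else 0) *
        (Q ^ (7 * m + r₂) * geo Q (7 * m + r₂) ^ 2) * geo Q (7 * n + r₃) +
      (if l = 0 then (-1 : ℂ) else 0) * geo Q (7 * m + r₂) *
        (Q ^ (7 * n + r₃) * geo Q (7 * n + r₃) ^ 2))) (by
    intro l m n
    by_cases hl : l = 0
    · subst hl
      have := pf_geo_zero h0 h1 (l := 7 * m + r₂) (j := 7 * n + r₃)
        (fun h => h23 (n - m) (by linarith)) (k2 _) (k3 _)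
      simp only [mul_zero, add_zero, geo_zero, zero_mul, zero_add, sub_zero, if_true, zero_sub]
      linear_combination this
    · have := pf_geo h0 h1 (k := 7 * l + 0) (l := 7 * m + r₂) (j := 7 * n + r₃)
        (fun h => k2 (m - l) (by linarith)) (fun h => k3 (n - l) (by linarith))
        (fun h => h23 (n - m) (by linarith)) (by omega) (k2 _) (k3 _)
      simp only [if_neg hl, zero_mul, add_zero] at this ⊢
      exact this)
  rw [triple_add h0 h1 b1 (fun l m n => (norm_add_le _ _).trans
    (add_le_add (b2 l m n) (b3 l m n))), triple_add h0 h1 b2 b3, t1, t2, t3] at h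
  simp only [zero_add, sub_zero, zero_sub, zero_mul] at h
  rw [h, dlam, lam, lam, dlam]
  ring

end

/-! ### Functional equations and the splitting of series modulo 7 -/

noncomputable section

/-- The functional equations reduce every `lam Q r` with `7 ∤ r` to `r = 1, 2, 3`. -/
theorem lam_vals {Q : ℂ} (h0 : Q ≠ 0) (h1 : ‖Q‖ < 1) :
    (lam Q 4 = lam Q 3 ∧ lam Q 5 = lam Q 2 ∧ lam Q 6 = lam Q 1) ∧
    (lam Q (-1) = -(Q * lam Q 1) ∧ lam Q (-2) = -(Q ^ 2 * lam Q 2) ∧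
      lam Q (-3) = -(Q ^ 3 * lam Q 3)) ∧
    (lam Q (-4) = -(Q ^ 4 * lam Q 3) ∧ lam Q (-5) = -(Q ^ 5 * lam Q 2) ∧
      lam Q (-6) = -(Q ^ 6 * lam Q 1)) := by
  have key : ∀ r : ℤ, (∀ n, 7 * n + r ≠ 0) → lam Q (7 - r) = lam Q r := by
    intro r hr
    have e : Q ^ (-r) * Q ^ r = 1 := by rw [← zpow_add₀ h0]; simp
    rw [show 7 - r = -r + 7 by ring, lam_add h0 h1 (fun n hn => hr (-n) (by linarith)),
      lam_neg h0 h1]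
    linear_combination lam Q r * e
  have a4 : lam Q 4 = lam Q 3 := by simpa using key 3 (fun n => by omega)
  have a5 : lam Q 5 = lam Q 2 := by simpa using key 2 (fun n => by omega)
  have a6 : lam Q 6 = lam Q 1 := by simpa using key 1 (fun n => by omega)
  refine ⟨⟨a4, a5, a6⟩, ⟨?_, ?_, ?_⟩, ?_, ?_, ?_⟩
  · rw [lam_neg h0 h1]; norm_cast; simp
  · rw [lam_neg h0 h1]; norm_cast
  · rw [lam_neg h0 h1]; norm_cast
  · rw [lam_neg h0 h1, a4]; norm_cast
  · rw [lam_neg h0 h1, a5]; norm_cast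
  · rw [lam_neg h0 h1, a6]; norm_cast

theorem dlam_vals {Q : ℂ} (h0 : Q ≠ 0) (h1 : ‖Q‖ < 1) :
    (dlam Q 4 = -dlam Q 3 ∧ dlam Q 5 = -dlam Q 2) := by
  have key : ∀ r : ℤ, (∀ n, 7 * n + r ≠ 0) → dlam Q (7 - r) = -dlam Q r := by
    intro r hr
    have e : Q ^ (-r) * Q ^ r = 1 := by rw [← zpow_add₀ h0]; simp
    rw [show 7 - r = -r + 7 by ring, dlam_add h0 h1,
      dlam_neg h0 h1, lam_neg h0 h1]
    linear_combination -dlam Q r * e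
  exact ⟨by simpa using key 3 (fun n => by omega), by simpa using key 2 (fun n => by omega)⟩

/-- The generalised pentagonal number `n (3 n + 1) / 2`, for `n ∈ ℤ`; the division is exact. -/
def pent (n : ℤ) : ℤ := n * (3 * n + 1) / 2

theorem two_pent (n : ℤ) : 2 * pent n = n * (3 * n + 1) := by
  refine Int.mul_ediv_cancel' (Even.two_dvd ?_)
  rcases Int.even_or_odd n with h | h
  · exact h.mul_right _
  · refine Even.mul_left ?_ _
    obtain ⟨k, rfl⟩ := h
    exact ⟨3 * k + 2, by ring⟩

/-- The term `(-1) ^ n q ^ (n (3 n + 1) / 2 + b n) A n` of a pentagonal series. -/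
def pterm (q : ℂ) (A : ℤ → ℂ) (b n : ℤ) : ℂ := (-1) ^ n * q ^ (pent n + b * n) * A n

/-- The bilateral series with terms `pterm`. With `A = 1` and `b = 0` it is Euler's product; with
`A = geo (q ^ 7)` it is the series `∑ (-1) ^ n q ^ (n (3 n + 1) / 2 + b n) / (1 - q ^ (7 n))`,
without its polar term `n = 0`, that expresses the ranks modulo `7`. -/
def full (q : ℂ) (A : ℤ → ℂ) (b : ℤ) : ℂ := ∑' n, pterm q A b n

/-- The part of `full` with summation index congruent to `r` modulo `7`, by `comp_eq`. -/
def comp (q : ℂ) (A : ℤ → ℂ) (b r : ℤ) : ℂ :=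
  (-1) ^ r * q ^ (pent r + b * r) * app (q ^ 7) A r (10 - b)

theorem comp_eq {q : ℂ} (hq : q ≠ 0) (A : ℤ → ℂ) (b r : ℤ) :
    comp q A b r = ∑' m, pterm q A b (7 * m + r) := by
  rw [comp, app, ← tsum_mul_left]
  refine tsum_congr fun m => ?_
  have h1 : ((-1 : ℂ)) ^ (7 * m + r) = (-1) ^ r * (-1) ^ m := by
    rw [add_comm, zpow_add₀ (by norm_num), zpow_mul]; norm_num
  have h2 : pent (7 * m + r) + b * (7 * m + r) =
      (pent r + b * r) + 7 * (21 * tri m + (3 * r - (10 - b)) * m) := by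
    have := two_pent r; have := two_pent (7 * m + r); have := two_tri m
    linarith
  have h3 : q ^ ((pent r + b * r) + 7 * (21 * tri m + (3 * r - (10 - b)) * m)) =
      q ^ (pent r + b * r) * (q ^ 7) ^ (21 * tri m + (3 * r - (10 - b)) * m) := by
    rw [zpow_add₀ hq, zpow_mul q 7]
    norm_cast
  rw [pterm, h1, h2, h3]
  ring

theorem comp_add {q : ℂ} (hq : q ≠ 0) (A : ℤ → ℂ) (b r : ℤ) :
    comp q A b (r + 7) = comp q A b r := by
  rw [comp_eq hq, comp_eq hq, ← (Equiv.subRight (1:ℤ)).tsum_eq]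
  refine tsum_congr fun m => ?_
  simp only [Equiv.subRight_apply]
  congr 1; ring

theorem summable_pterm {q : ℂ} (hq : q ≠ 0) (h1 : ‖q‖ < 1) {A : ℤ → ℂ} {a : ℝ}
    (hA : ∀ n, ‖A n‖ ≤ a) (b : ℤ) : Summable fun n => ‖pterm q A b n‖ := by
  have hs : Summable fun n : ℤ => ‖q‖ ^ (pent n + b * n) := by
    refine summable_zpow_of_le (norm_pos_iff.2 hq) h1 _ (b ^ 2 + 4) (fun n => ?_)
    have := two_pent n
    rcases abs_cases n with ⟨h, h'⟩ | ⟨h, h'⟩ <;> rw [h] <;>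
      nlinarith [sq_nonneg (n + b), sq_nonneg (n - 1), sq_nonneg (n + 1)]
  refine Summable.of_nonneg_of_le (fun _ => norm_nonneg _) (fun n => ?_) (hs.mul_right a)
  have : ‖pterm q A b n‖ = ‖q‖ ^ (pent n + b * n) * ‖A n‖ := by simp [pterm]
  rw [this]
  exact mul_le_mul_of_nonneg_left (hA n) (by positivity)

theorem full_eq {q : ℂ} (hq : q ≠ 0) (h1 : ‖q‖ < 1) {A : ℤ → ℂ} {a : ℝ}
    (hA : ∀ n, ‖A n‖ ≤ a) (b : ℤ) :
    full q A b = comp q A b 0 + comp q A b 1 + comp q A b 2 + comp q A b 3 + comp q A b 4 +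
      comp q A b 5 + comp q A b 6 := by
  have hs := (summable_pterm hq h1 hA b).of_norm
  have hs2 : Summable fun p : ℤ × Fin 7 => pterm q A b ((Int.divModEquiv 7).symm p) :=
    (Int.divModEquiv 7).symm.summable_iff.2 hs
  have hj : ∀ j : Fin 7, Summable fun m : ℤ => pterm q A b (7 * m + (j : ℕ)) := by
    intro j
    refine (hs.comp_injective (i := fun m : ℤ => 7 * m + (j : ℕ)) ?_)
    intro x y h
    simp only at h
    omega
  rw [full, ← (Int.divModEquiv 7).symm.tsum_eq, hs2.tsum_prod]
  have h : ∀ m : ℤ, ∑' j : Fin 7, pterm q A b ((Int.divModEquiv 7).symm (m, j)) =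
      ∑ j : Fin 7, pterm q A b (7 * m + (j : ℕ)) := by
    intro m
    rw [tsum_fintype]
    refine Finset.sum_congr rfl fun j _ => ?_
    simp [mul_comm]
  rw [tsum_congr h, Summable.tsum_finsetSum (fun j _ => hj j)]
  simp only [comp_eq hq, Fin.sum_univ_succ]
  simp [add_assoc]

/-- Two representatives of the same residue class modulo `7` give the same component. -/
theorem app_shift {q : ℂ} (hq : q ≠ 0) (A : ℤ → ℂ) (b r : ℤ) :
    app (q ^ 7) A r (10 - b) = -(q ^ 7) ^ (3 * r + 11 + b) * app (q ^ 7) A (r + 7) (10 - b) := by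
  have h := comp_add hq A b r
  rw [comp, comp, show pent (r + 7) + b * (r + 7) = (pent r + b * r) + 7 * (3 * r + 11 + b) by
    have := two_pent r; have := two_pent (r+7); linarith, zpow_add₀ hq, zpow_mul q 7,
    zpow_add₀ (by norm_num : (-1 : ℂ) ≠ 0)] at h
  have h2 : (-1 : ℂ) ^ r * q ^ (pent r + b * r) ≠ 0 :=
    mul_ne_zero (zpow_ne_zero _ (by norm_num)) (zpow_ne_zero _ hq)
  apply mul_left_cancel₀ h2
  rw [← h]
  have : (-1 : ℂ) ^ (7 : ℤ) = -1 := by norm_num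
  rw [this, show q ^ (7 : ℤ) = q ^ 7 by norm_cast]
  ring

end

/-! ### The dissection of Euler's product and relations between its components -/

noncomputable section

/-- The `7`-dissection of Euler's product, with a relation between the three Lambert series. Five
instances of `line_one` on residues of sum `10` modulo `7` express the other components through the
one with index `1`; there is one instance more than needed, whence the second statement. -/
theorem euler_dissect {q : ℂ} (hq : q ≠ 0) (h1 : ‖q‖ < 1) (hX : lam (q ^ 7) 1 ≠ 0)
    (hY : lam (q ^ 7) 2 ≠ 0)
  (hZ : lam (q ^ 7) 3 ≠ 0) :
    full q (fun _ => 1) 0 = app (q ^ 7) (fun _ => 1) 1 10 *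
      (lam (q ^ 7) 1 / lam (q ^ 7) 2 - q * lam (q ^ 7) 2 / lam (q ^ 7) 3 - q ^ 2
        + q ^ 5 * lam (q ^ 7) 3 / lam (q ^ 7) 1) ∧
    app (q ^ 7) (fun _ => 1) 1 10 * (lam (q ^ 7) 1 ^ 3 * lam (q ^ 7) 3 ^ 2
      - lam (q ^ 7) 1 ^ 2 * lam (q ^ 7) 2 ^ 3 - q ^ 7 * lam (q ^ 7) 2 ^ 2 * lam (q ^ 7) 3 ^ 3)
      = 0 := by
  have hf := full_eq hq h1 (A := fun _ => 1) (a := 1) (by simp) 0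
  have hs := app_shift hq (fun _ => 1) 0 0
  have h0' : q ^ 7 ≠ 0 := pow_ne_zero _ hq
  have h1' : ‖q ^ 7‖ < 1 := by rw [norm_pow]; exact pow_lt_one₀ (norm_nonneg _) h1 (by norm_num)
  simp only [comp, show pent 0 = 0 by rfl, show pent 1 = 2 by rfl, show pent 2 = 7 by rfl,
    show pent 3 = 15 by rfl, show pent 4 = 26 by rfl, show pent 5 = 40 by rfl,
    show pent 6 = 57 by rfl] at hf
  norm_num at hf hs
  norm_cast at hf hs
  generalize hQ : q ^ 7 = Q at *
  obtain ⟨⟨l4, l5, l6⟩, ⟨m1, m2, m3⟩, m4, m5, m6⟩ := lam_vals h0' h1'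
  have E1 := line_one h0' h1' (r₁ := 1) (r₂ := 2) (r₃ := 7) (by omega) (by omega) (by omega)
  have E2 := line_one h0' h1' (r₁ := 1) (r₂ := 3) (r₃ := 6) (by omega) (by omega) (by omega)
  have E3 := line_one h0' h1' (r₁ := 1) (r₂ := 4) (r₃ := 5) (by omega) (by omega) (by omega)
  have E4 := line_one h0' h1' (r₁ := 2) (r₂ := 3) (r₃ := 5) (by omega) (by omega) (by omega)
  have E5 := line_one h0' h1' (r₁ := 0) (r₂ := 4) (r₃ := 6) (by omega) (by omega) (by omega)
  norm_num [l4,l5,l6,m1,m2,m3,m4,m5,m6] at E1 E2 E3 E4 E5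
  clear l4 l5 l6 m1 m2 m3 m4 m5 m6
  generalize lam Q 1 = X at *
  generalize lam Q 2 = Y at *
  generalize lam Q 3 = Z at *
  generalize app Q (fun _ => 1) = H at *
  -- `7`-periodicity `hs` merges the components `0` and `7` in the first of these relations.
  have F1 : H 0 10 + Q * H 2 10 = H 1 10 * X / Y := by
    rw [eq_div_iff hY]
    apply mul_right_cancel₀ hX
    linear_combination -E1 + X * Y * hs
  have F2 : Q ^ 2 * H 3 10 - Q ^ 8 * H 6 10 = H 1 10 * Y / Z := by
    rw [eq_div_iff hZ]
    apply mul_right_cancel₀ hY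
    linear_combination -E2
  have F3 : Q ^ 3 * H 4 10 - Q ^ 5 * H 5 10 = H 1 10 * Z / X := by
    rw [eq_div_iff hX]
    apply mul_right_cancel₀ hZ
    linear_combination -E3
  constructor
  · subst hQ
    linear_combination hf + F1 - q * F2 + q ^ 5 * F3
  · rw [eq_div_iff hX] at F3
    rw [eq_div_iff hY] at F1
    rw [eq_div_iff hZ] at F2
    linear_combination -X ^ 2 * Z ^ 2 * F1 + X ^ 2 * Y ^ 2 * F2 + Q * Y ^ 2 * Z ^ 2 * F3
      + X * Y * Z * (Q * E4 + E5)

/-- The relation between the three Lambert series, an avatar of the equation of Klein's quartic. -/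
theorem klein_of {q : ℂ} (hq : q ≠ 0) (h1 : ‖q‖ < 1) (hX : lam (q ^ 7) 1 ≠ 0)
    (hY : lam (q ^ 7) 2 ≠ 0) (hZ : lam (q ^ 7) 3 ≠ 0)
    (ha : app (q ^ 7) (fun _ => 1) 1 10 ≠ 0) :
    lam (q ^ 7) 1 ^ 3 * lam (q ^ 7) 3 ^ 2 - lam (q ^ 7) 1 ^ 2 * lam (q ^ 7) 2 ^ 3
      - q ^ 7 * lam (q ^ 7) 2 ^ 2 * lam (q ^ 7) 3 ^ 3 = 0 :=
  (mul_eq_zero.1 (euler_dissect hq h1 hX hY hZ).2).resolve_left ha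

/-- The components of `full q (geo (q ^ 7)) 4`, paired as in the dissection and reduced to one of
them. The coefficients of that one are the coefficients in the dissection of Euler's product. -/
theorem rel4 {Q X Y Z : ℂ} (h0 : Q ≠ 0) (h1 : ‖Q‖ < 1) (hX : X ≠ 0)
    (hY : Y ≠ 0) (hZ : Z ≠ 0)
    (eX : lam Q 1 = X) (eY : lam Q 2 = Y) (eZ : lam Q 3 = Z) :
    (app Q (geo Q) 1 6 + Q ^ 3 * app Q (geo Q) 3 6 = Z + Q * X / Y * app Q (geo Q) 2 6) ∧
    (app Q (geo Q) 0 6 + Q ^ 6 * app Q (geo Q) 4 6 = dlam Q 3 / Z - dlam Q 2 / Y +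
        Q ^ 2 * Y / Z * app Q (geo Q) 2 6) ∧
    (app Q (geo Q) (-1) 6 + Q ^ 9 * app Q (geo Q) 5 6 = -(Q * Y ^ 2 / Z) +
        Q ^ 3 * Z / X * app Q (geo Q) 2 6) := by
  obtain ⟨⟨l4, l5, l6⟩, ⟨m1, m2, m3⟩, m4, m5, m6⟩ := lam_vals h0 h1
  obtain ⟨d4, d5⟩ := dlam_vals h0 h1
  have dm1 := dlam_neg h0 h1 1
  have A1 := line_geo h0 h1 (r₁ := 2) (r₂ := 1) (r₃ := 3)
    (by omega) (by omega) (by omega) (by omega) (by omega) (by omega)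
  have A2 := line_geo_zero h0 h1 (r₂ := 2) (r₃ := 4) (by omega) (by omega) (by omega)
  have A3 := line_geo h0 h1 (r₁ := 2) (r₂ := -1) (r₃ := 5)
    (by omega) (by omega) (by omega) (by omega) (by omega) (by omega)
  norm_num [l4, l5, l6, m1, m2, m3, m4, m5, m6, d4, d5, eX, eY, eZ] at A1 A2 A3 dm1
  refine ⟨?_, ?_, ?_⟩
  · linear_combination (norm := skip) A1 / (X * Y)
    field_simp
    ring
  · linear_combination (norm := skip) A2 / (Y * Z)
    field_simp
    ring
  · linear_combination (norm := skip) A3 / (X * Z)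
    field_simp
    ring

/-- The analogue of `rel4` for `full q (geo (q ^ 7)) 5`. -/
theorem rel5 {Q X Y Z : ℂ} (h0 : Q ≠ 0) (h1 : ‖Q‖ < 1) (hX : X ≠ 0)
    (hY : Y ≠ 0) (hZ : Z ≠ 0)
    (eX : lam Q 1 = X) (eY : lam Q 2 = Y) (eZ : lam Q 3 = Z) :
    (Q ^ 5 * app Q (geo Q) 3 5 - app Q (geo Q) (-2) 5 = Q ^ 7 * X / Y * app Q (geo Q) 4 5 +
        Q ^ 2 * Z ^ 2 / X) ∧
    (Q ^ 3 * app Q (geo Q) 2 5 - app Q (geo Q) (-1) 5 = Q ^ 7 * Y / Z * app Q (geo Q) 4 5 + Q * X) ∧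
    (app Q (geo Q) 0 5 - Q * app Q (geo Q) 1 5 = dlam Q 3 / Z - dlam Q 1 / X -
        Q ^ 7 * Z / X * app Q (geo Q) 4 5) := by
  obtain ⟨⟨l4, l5, l6⟩, ⟨m1, m2, m3⟩, m4, m5, m6⟩ := lam_vals h0 h1
  obtain ⟨d4, d5⟩ := dlam_vals h0 h1
  have dm1 := dlam_neg h0 h1 1
  have A1 := line_geo h0 h1 (r₁ := 4) (r₂ := 3) (r₃ := -2)
    (by omega) (by omega) (by omega) (by omega) (by omega) (by omega)
  have A2 := line_geo h0 h1 (r₁ := 4) (r₂ := 2) (r₃ := -1)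
    (by omega) (by omega) (by omega) (by omega) (by omega) (by omega)
  have A3 := line_geo_zero h0 h1 (r₂ := 4) (r₃ := 1) (by omega) (by omega) (by omega)
  norm_num [l4, l5, l6, m1, m2, m3, m4, m5, m6, d4, d5, eX, eY, eZ] at A1 A2 A3 dm1
  refine ⟨?_, ?_, ?_⟩
  · linear_combination (norm := skip) -A1 / (X * Y)
    field_simp
    ring
  · linear_combination (norm := skip) -A2 / (Y * Z)
    field_simp
    ring
  · linear_combination (norm := skip) A3 / (X * Z)
    field_simp
    ring

/-- The analogue of `rel4` for `full q (geo (q ^ 7)) 6`. -/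
theorem rel6 {Q X Y Z : ℂ} (h0 : Q ≠ 0) (h1 : ‖Q‖ < 1) (hX : X ≠ 0)
    (hY : Y ≠ 0) (hZ : Z ≠ 0)
    (eX : lam Q 1 = X) (eY : lam Q 2 = Y) (eZ : lam Q 3 = Z) :
    (app Q (geo Q) 0 4 - Q ^ 10 * app Q (geo Q) 5 4 = X / (Q * Y) * app Q (geo Q) (-1) 4 +
        dlam Q 2 / Y + 1 + dlam Q 1 / X) ∧
    (Q ^ 2 * app Q (geo Q) 1 4 - Q ^ 8 * app Q (geo Q) 4 4 = Y / Z * app Q (geo Q) (-1) 4 +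
        Q * X ^ 2 / Y) ∧
    (Q ^ 3 * app Q (geo Q) 2 4 - Q ^ 5 * app Q (geo Q) 3 4 = Z / X * app Q (geo Q) (-1) 4 +
        Q * Y) := by
  obtain ⟨⟨l4, l5, l6⟩, ⟨m1, m2, m3⟩, m4, m5, m6⟩ := lam_vals h0 h1
  obtain ⟨d4, d5⟩ := dlam_vals h0 h1
  have dm1 := dlam_neg h0 h1 1
  have A1 := line_geo_zero h0 h1 (r₂ := -1) (r₃ := 5) (by omega) (by omega) (by omega)
  have A2 := line_geo h0 h1 (r₁ := -1) (r₂ := 4) (r₃ := 1)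
    (by omega) (by omega) (by omega) (by omega) (by omega) (by omega)
  have A3 := line_geo h0 h1 (r₁ := -1) (r₂ := 3) (r₃ := 2)
    (by omega) (by omega) (by omega) (by omega) (by omega) (by omega)
  norm_num [l4, l5, l6, m1, m2, m3, m4, m5, m6, d4, d5, eX, eY, eZ] at A1 A2 A3 dm1
  simp only [dm1] at A1
  refine ⟨?_, ?_, ?_⟩
  · linear_combination (norm := skip) -A1 / (Q * X * Y)
    field_simp
    ring
  · linear_combination (norm := skip) -A2 / (Y * Z)
    field_simp
    ring
  · linear_combination (norm := skip) -A3 / (X * Z)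
    field_simp
    ring

/-- A combination of logarithmic derivatives which is a quotient of the Lambert series: two further
relations of the type of `line_geo` on the components in `rel4` overdetermine them, and eliminating
the components with `K` leaves this identity. -/
theorem delta4 {Q X Y Z : ℂ} (h0 : Q ≠ 0) (h1 : ‖Q‖ < 1) (hX : X ≠ 0)
    (hY : Y ≠ 0) (hZ : Z ≠ 0)
    (eX : lam Q 1 = X) (eY : lam Q 2 = Y) (eZ : lam Q 3 = Z)
    (K : X ^ 3 * Z ^ 2 - X ^ 2 * Y ^ 3 - Q * Y ^ 2 * Z ^ 3 = 0) :
    dlam Q 3 / Z - 2 * dlam Q 2 / Y + dlam Q 1 / X = Q * Y ^ 2 / X := by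
  obtain ⟨⟨l4, l5, l6⟩, ⟨m1, m2, m3⟩, m4, m5, m6⟩ := lam_vals h0 h1
  obtain ⟨d4, d5⟩ := dlam_vals h0 h1
  have dm1 := dlam_neg h0 h1 1
  have A1 := line_geo_zero h0 h1 (r₂ := 1) (r₃ := 5) (by omega) (by omega) (by omega)
  have A2 := line_geo h0 h1 (r₁ := 3) (r₂ := 4) (r₃ := -1)
    (by omega) (by omega) (by omega) (by omega) (by omega) (by omega)
  norm_num [l4, l5, l6, m1, m2, m3, m4, m5, m6, d4, d5, eX, eY, eZ] at A1 A2 dm1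
  obtain ⟨G1, G2, G3⟩ := rel4 h0 h1 hX hY hZ eX eY eZ
  linear_combination (norm := skip) (A1 + A2) / (X * Y) - G2 + Q * Z / Y * G1 - Z / X * G3
    + Q ^ 2 * app Q (geo Q) 2 6 / (X ^ 2 * Y ^ 2 * Z) * K
  field_simp
  ring

/-- The analogue of `delta4` for the components in `rel5`. -/
theorem delta5 {Q X Y Z : ℂ} (h0 : Q ≠ 0) (h1 : ‖Q‖ < 1) (hX : X ≠ 0)
    (hY : Y ≠ 0) (hZ : Z ≠ 0)
    (eX : lam Q 1 = X) (eY : lam Q 2 = Y) (eZ : lam Q 3 = Z)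
    (K : X ^ 3 * Z ^ 2 - X ^ 2 * Y ^ 3 - Q * Y ^ 2 * Z ^ 3 = 0)
    (hs : app Q (geo Q) (-2) 5 = -Q ^ 10 * app Q (geo Q) 5 5) :
    2 * dlam Q 3 / Z + dlam Q 2 / Y - dlam Q 1 / X = -(Q * Z ^ 2 / Y) := by
  obtain ⟨⟨l4, l5, l6⟩, ⟨m1, m2, m3⟩, m4, m5, m6⟩ := lam_vals h0 h1
  obtain ⟨d4, d5⟩ := dlam_vals h0 h1
  have dm1 := dlam_neg h0 h1 1
  have A1 := line_geo_zero h0 h1 (r₂ := 2) (r₃ := 3) (by omega) (by omega) (by omega)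
  have A2 := line_geo h0 h1 (r₁ := 1) (r₂ := 5) (r₃ := -1)
    (by omega) (by omega) (by omega) (by omega) (by omega) (by omega)
  norm_num [l4, l5, l6, m1, m2, m3, m4, m5, m6, d4, d5, eX, eY, eZ] at A1 A2 dm1
  obtain ⟨G1, G2, G3⟩ := rel5 h0 h1 hX hY hZ eX eY eZ
  linear_combination (norm := skip) (A1 + A2 / Q) / (Y * Z) - G3 + X / (Q * Z) * G2 -
      X / (Q * Y) * G1
    - X / (Q * Y) * hs - Q ^ 6 * app Q (geo Q) 4 5 / (X * Y ^ 2 * Z ^ 2) * K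
  field_simp
  ring

/-- The analogue of `delta4` for the components in `rel6`. The constant `1` comes from
`dlam Q (-1) = Q (lam Q 1 + dlam Q 1)`. -/
theorem delta6 {Q X Y Z : ℂ} (h0 : Q ≠ 0) (h1 : ‖Q‖ < 1) (hX : X ≠ 0)
    (hY : Y ≠ 0) (hZ : Z ≠ 0)
    (eX : lam Q 1 = X) (eY : lam Q 2 = Y) (eZ : lam Q 3 = Z)
    (K : X ^ 3 * Z ^ 2 - X ^ 2 * Y ^ 3 - Q * Y ^ 2 * Z ^ 3 = 0)
    (hs : app Q (geo Q) (-2) 4 = -Q ^ 11 * app Q (geo Q) 5 4) :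
    1 + 2 * dlam Q 1 / X + dlam Q 2 / Y + dlam Q 3 / Z = X ^ 2 / Z := by
  obtain ⟨⟨l4, l5, l6⟩, ⟨m1, m2, m3⟩, m4, m5, m6⟩ := lam_vals h0 h1
  obtain ⟨d4, d5⟩ := dlam_vals h0 h1
  have dm1 := dlam_neg h0 h1 1
  have A1 := line_geo_zero h0 h1 (r₂ := 1) (r₃ := 3) (by omega) (by omega) (by omega)
  have A2 := line_geo h0 h1 (r₁ := 2) (r₂ := 4) (r₃ := -2)
    (by omega) (by omega) (by omega) (by omega) (by omega) (by omega)
  norm_num [l4, l5, l6, m1, m2, m3, m4, m5, m6, d4, d5, eX, eY, eZ] at A1 A2 dm1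
  obtain ⟨G1, G2, G3⟩ := rel6 h0 h1 hX hY hZ eX eY eZ
  linear_combination (norm := skip) (A1 + A2 / Q) / (X * Z) - G1 + Y / (Q * Z) * G2 + Y / X * G3
    - hs / Q - app Q (geo Q) (-1) 4 / (Q * X ^ 2 * Y * Z ^ 2) * K
  field_simp
  ring

end

/-! ### Dissections of the rank series -/

noncomputable section

/-- The dissection of the rank series with `b = 4`. The first factor of the product is Euler's
product up to a constant in `q ^ 7`, and the second factor has no term in `q ^ 5`. -/
theorem full_form4 {q X Y Z : ℂ} (hq : q ≠ 0) (h1 : ‖q‖ < 1) (hX : X ≠ 0) (hY : Y ≠ 0)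
    (hZ : Z ≠ 0) (eX : lam (q ^ 7) 1 = X) (eY : lam (q ^ 7) 2 = Y) (eZ : lam (q ^ 7) 3 = Z)
    (K : X ^ 3 * Z ^ 2 - X ^ 2 * Y ^ 3 - q ^ 7 * Y ^ 2 * Z ^ 3 = 0) :
    full q (geo (q ^ 7)) 4 = 1 / 7 +
      (X / Y - q * Y / Z - q ^ 2 + q ^ 5 * Z / X) * (-(q ^ 6 * (q ^ 7 *
          app (q ^ 7) (geo (q ^ 7)) 2 6)) +
      (-(X * Y / Z) - q * X - 2 * q ^ 2 * X * Z / Y - 3 * q ^ 3 * Y + 2 * q ^ 4 * Z -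
          4 * q ^ 6 * Y * Z / X) / 7) := by
  have h0' : q ^ 7 ≠ 0 := pow_ne_zero _ hq
  have h1' : ‖q ^ 7‖ < 1 := by
    rw [norm_pow]; exact pow_lt_one₀ (norm_nonneg _) h1 (by norm_num)
  have hf := full_eq hq h1 (norm_geo_le h0' h1') 4
  have c6 := comp_add hq (geo (q ^ 7)) 4 (-1)
  norm_num at c6
  rw [c6] at hf
  simp only [comp, show pent (-1) = 1 by rfl, show pent 0 = 0 by rfl, show pent 1 = 2 by rfl,
      show pent 2 = 7 by rfl, show pent 3 = 15 by rfl, show pent 4 = 26 by rfl, show pent 5 =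
      40 by rfl] at hf
  norm_num at hf
  have hs5 := app_shift hq (geo (q ^ 7)) 5 (-2)
  have hs6 := app_shift hq (geo (q ^ 7)) 6 (-2)
  norm_num at hs5 hs6
  obtain ⟨G1, G2, G3⟩ := rel4 h0' h1' hX hY hZ eX eY eZ
  have D4 := delta4 h0' h1' hX hY hZ eX eY eZ K
  have D5 := delta5 h0' h1' hX hY hZ eX eY eZ K (by simpa using hs5)
  have D6 := delta6 h0' h1' hX hY hZ eX eY eZ K (by simpa using hs6)
  -- `G1`, `G2`, `G3` eliminate all components but one. The multiples of `D4`, `D5`, `D6` are those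
  -- matching the derivatives in `G2`; the constant `1` in `D6` gives the constant `1 / 7`.
  linear_combination (norm := skip) hf - q ^ 6 * G1 + G2 - (q ^ 3)⁻¹ * G3 + (4 * D4 + 2 * D5 -
      D6) / 7 +
    (2 * q ^ 2 * X * Z + q * X * Y - 4 * q ^ 4 * Y * Z) / (7 * X ^ 2 * Y ^ 2 * Z ^ 2) * K
  field_simp
  ring

/-- The dissection of the rank series with `b = 5`; see `full_form4`. -/
theorem full_form5 {q X Y Z : ℂ} (hq : q ≠ 0) (h1 : ‖q‖ < 1) (hX : X ≠ 0) (hY : Y ≠ 0)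
    (hZ : Z ≠ 0) (eX : lam (q ^ 7) 1 = X) (eY : lam (q ^ 7) 2 = Y) (eZ : lam (q ^ 7) 3 = Z)
    (K : X ^ 3 * Z ^ 2 - X ^ 2 * Y ^ 3 - q ^ 7 * Y ^ 2 * Z ^ 3 = 0) :
    full q (geo (q ^ 7)) 5 = 2 / 7 +
      (X / Y - q * Y / Z - q ^ 2 + q ^ 5 * Z / X) * (-(q ^ 2 * ((q ^ 7) ^ 6 *
          app (q ^ 7) (geo (q ^ 7)) 4 5)) +
      (-(2 * X * Y / Z) - 2 * q * X - 4 * q ^ 2 * X * Z / Y + q ^ 3 * Y - 3 * q ^ 4 * Z -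
          q ^ 6 * Y * Z / X) / 7) := by
  have h0' : q ^ 7 ≠ 0 := pow_ne_zero _ hq
  have h1' : ‖q ^ 7‖ < 1 := by
    rw [norm_pow]; exact pow_lt_one₀ (norm_nonneg _) h1 (by norm_num)
  have hf := full_eq hq h1 (norm_geo_le h0' h1') 5
  have c6 := comp_add hq (geo (q ^ 7)) 5 (-1)
  have c5 := comp_add hq (geo (q ^ 7)) 5 (-2)
  norm_num at c5 c6
  rw [c5, c6] at hf
  simp only [comp, show pent (-2) = 5 by rfl, show pent (-1) = 1 by rfl, show pent 0 = 0 by rfl,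
      show pent 1 = 2 by rfl, show pent 2 = 7 by rfl, show pent 3 = 15 by rfl, show pent 4 =
      26 by rfl] at hf
  norm_num at hf
  have hs5 := app_shift hq (geo (q ^ 7)) 5 (-2)
  have hs6 := app_shift hq (geo (q ^ 7)) 6 (-2)
  norm_num at hs5 hs6
  obtain ⟨G1, G2, G3⟩ := rel5 h0' h1' hX hY hZ eX eY eZ
  have D4 := delta4 h0' h1' hX hY hZ eX eY eZ K
  have D5 := delta5 h0' h1' hX hY hZ eX eY eZ K (by simpa using hs5)
  have D6 := delta6 h0' h1' hX hY hZ eX eY eZ K (by simpa using hs6)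
  -- Here the derivatives occur in `G3`.
  linear_combination (norm := skip) hf - (q ^ 5)⁻¹ * G1 + (q ^ 4)⁻¹ * G2 + G3 + (D4 + 4 * D5 -
      2 * D6) / 7 +
    (4 * q ^ 2 * X * Z + 2 * q * X * Y - q ^ 4 * Y * Z) / (7 * X ^ 2 * Y ^ 2 * Z ^ 2) * K
  field_simp
  ring

/-- The dissection of the rank series with `b = 6`; see `full_form4`. -/
theorem full_form6 {q X Y Z : ℂ} (hq : q ≠ 0) (h1 : ‖q‖ < 1) (hX : X ≠ 0) (hY : Y ≠ 0)
    (hZ : Z ≠ 0) (eX : lam (q ^ 7) 1 = X) (eY : lam (q ^ 7) 2 = Y) (eZ : lam (q ^ 7) 3 = Z)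
    (K : X ^ 3 * Z ^ 2 - X ^ 2 * Y ^ 3 - q ^ 7 * Y ^ 2 * Z ^ 3 = 0) :
    full q (geo (q ^ 7)) 6 = 3 / 7 +
      (X / Y - q * Y / Z - q ^ 2 + q ^ 5 * Z / X) * ((q ^ 7)⁻¹ * app (q ^ 7) (geo (q ^ 7)) (-1) 4 +
      (4 * X * Y / Z - 3 * q * X + q ^ 2 * X * Z / Y - 2 * q ^ 3 * Y - q ^ 4 * Z +
          2 * q ^ 6 * Y * Z / X) / 7) := by
  have h0' : q ^ 7 ≠ 0 := pow_ne_zero _ hq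
  have h1' : ‖q ^ 7‖ < 1 := by
    rw [norm_pow]; exact pow_lt_one₀ (norm_nonneg _) h1 (by norm_num)
  have hf := full_eq hq h1 (norm_geo_le h0' h1') 6
  have c6 := comp_add hq (geo (q ^ 7)) 6 (-1)
  norm_num at c6
  rw [c6] at hf
  simp only [comp, show pent (-1) = 1 by rfl, show pent 0 = 0 by rfl, show pent 1 = 2 by rfl,
      show pent 2 = 7 by rfl, show pent 3 = 15 by rfl, show pent 4 = 26 by rfl, show pent 5 =
      40 by rfl] at hf
  norm_num at hf
  have hs5 := app_shift hq (geo (q ^ 7)) 5 (-2)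
  have hs6 := app_shift hq (geo (q ^ 7)) 6 (-2)
  norm_num at hs5 hs6
  obtain ⟨G1, G2, G3⟩ := rel6 h0' h1' hX hY hZ eX eY eZ
  have D4 := delta4 h0' h1' hX hY hZ eX eY eZ K
  have D5 := delta5 h0' h1' hX hY hZ eX eY eZ K (by simpa using hs5)
  have D6 := delta6 h0' h1' hX hY hZ eX eY eZ K (by simpa using hs6)
  -- Here the derivatives occur in `G1`.
  linear_combination (norm := skip) hf + G1 - (q ^ 6)⁻¹ * G2 + (q ^ 2)⁻¹ * G3 + (-2 * D4 - D5 +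
      4 * D6) / 7 +
    (-q ^ 2 * X * Z - 4 * q * X * Y + 2 * q ^ 4 * Y * Z) / (7 * X ^ 2 * Y ^ 2 * Z ^ 2) * K
  field_simp
  ring

end

/-! ### Recursions for the number of partitions of bounded rank -/

/-- A partition is recovered from its number of parts and what is left after removing the first
column of its Ferrers diagram. -/
theorem ms_split (s : Multiset ℕ) (hs : ∀ x ∈ s, 0 < x) :
    ((s.map (· - 1)).filter (0 < ·)).map (· + 1) +
      Multiset.replicate (s.card - ((s.map (· - 1)).filter (0 < ·)).card) 1 = s := by
  induction s using Multiset.induction with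
  | empty => simp
  | cons a s ih =>
    have h := ih fun x hx => hs x (Multiset.mem_cons_of_mem hx)
    have ha := hs a (Multiset.mem_cons_self a s)
    have hc : ((s.map (· - 1)).filter (0 < ·)).card ≤ s.card :=
      (Multiset.card_le_card (Multiset.filter_le _ _)).trans (by simp)
    by_cases h1 : 1 < a
    · have : 0 < a - 1 := by omega
      simp only [Multiset.map_cons, Multiset.filter_cons_of_pos _ this, Multiset.card_cons,
        Nat.add_sub_add_right, Multiset.cons_add, h]
      congr 1; omega
    · have e : a = 1 := by omega
      subst e
      have : ¬ 0 < 1 - 1 := by omega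
      simp only [Multiset.map_cons, Multiset.filter_cons_of_neg _ this, Multiset.card_cons]
      rw [Nat.sub_add_comm hc, Multiset.replicate_succ, Multiset.add_cons, h]

theorem sup_mem {t : Multiset ℕ} (h : t ≠ 0) : t.sup ∈ t := by
  induction t using Multiset.induction with
  | empty => simp at h
  | cons a s ih =>
    rw [Multiset.sup_cons]
    by_cases hs : s = 0
    · simp [hs]
    · rcases le_total a s.sup with h | h
      · rw [sup_eq_right.2 h]; exact Multiset.mem_cons_of_mem (ih hs)
      · rw [sup_eq_left.2 h]; exact Multiset.mem_cons_self _ _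

theorem cons_erase_sup (t : Multiset ℕ) (ht : ∀ x ∈ t, 0 < x) :
    (t.sup ::ₘ t.erase t.sup).filter (0 < ·) = t := by
  by_cases h : t = 0
  · subst h; simp
  · rw [Multiset.cons_erase (sup_mem h), Multiset.filter_eq_self]; exact ht

theorem sum_map_succ (u : Multiset ℕ) : (u.map (· + 1)).sum = u.sum + u.card := by
  rw [Multiset.sum_map_add]; simp

theorem sum_filter_pos (u : Multiset ℕ) : (u.filter (0 < ·)).sum = u.sum := by
  induction u using Multiset.induction with
  | empty => simp
  | cons a s ih =>
    by_cases h : 0 < a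
    · simp [Multiset.filter_cons_of_pos _ h, ih]
    · rw [Multiset.filter_cons_of_neg _ h, ih]; simp; omega

theorem sum_map_pred (s : Multiset ℕ) (hs : ∀ x ∈ s, 0 < x) :
    (s.map (· - 1)).sum + s.card = s.sum := by
  induction s using Multiset.induction with
  | empty => simp
  | cons a s ih =>
    have h := ih fun x hx => hs x (Multiset.mem_cons_of_mem hx)
    have ha := hs a (Multiset.mem_cons_self a s)
    simp; omega

/-- Remove the first column of the Ferrers diagram of `s` and insert a new largest part
`s.card + r`. Only used where `0 ≤ s.card + r`, so that `toNat` does not truncate. -/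
def down (r : ℤ) (s : Multiset ℕ) : Multiset ℕ :=
  ((s.card + r).toNat ::ₘ (s.map (· - 1)).filter (0 < ·)).filter (0 < ·)

/-- The inverse of `down`: delete the largest part of `t` and insert a first column of length
`t.sup - r`. -/
def up (r : ℤ) (t : Multiset ℕ) : Multiset ℕ :=
  (t.erase t.sup).map (· + 1) +
    Multiset.replicate ((t.sup - r).toNat - (t.erase t.sup).card) 1

theorem down_sum (r : ℤ) (s : Multiset ℕ) (hs : ∀ x ∈ s, 0 < x) (h : 0 ≤ s.card + r) :
    ((down r s).sum : ℤ) = s.sum + r := by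
  have := sum_map_pred s hs
  rw [down, sum_filter_pos, Multiset.sum_cons, sum_filter_pos]
  omega

theorem down_sup (r : ℤ) (s : Multiset ℕ) (h : (s.sup : ℤ) - s.card ≤ r + 1) :
    (down r s).sup = (s.card + r).toNat := by
  apply le_antisymm
  · refine Multiset.sup_le.2 fun x hx => ?_
    rw [down, Multiset.mem_filter, Multiset.mem_cons, Multiset.mem_filter, Multiset.mem_map] at hx
    obtain ⟨rfl | ⟨⟨y, hy, rfl⟩, -⟩, -⟩ := hx
    · rfl
    · have := Multiset.le_sup hy
      omega
  · by_cases hp : 0 < (s.card + r).toNat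
    · apply Multiset.le_sup
      rw [down, Multiset.mem_filter]
      exact ⟨Multiset.mem_cons_self _ _, hp⟩
    · omega

theorem down_erase (r : ℤ) (s : Multiset ℕ) (h : (s.sup : ℤ) - s.card ≤ r + 1) :
    (down r s).erase (down r s).sup = (s.map (· - 1)).filter (0 < ·) := by
  rw [down_sup r s h, down]
  by_cases hp : 0 < (s.card + r).toNat
  · rw [Multiset.filter_cons_of_pos _ hp, Multiset.erase_cons_head, Multiset.filter_filter]
    simp
  · rw [Multiset.filter_cons_of_neg _ hp, Multiset.filter_filter, Multiset.erase_of_notMem]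
    · simp
    · intro hm; exact hp (Multiset.mem_filter.1 hm).2.1

theorem up_down (r : ℤ) (s : Multiset ℕ) (hs : ∀ x ∈ s, 0 < x)
    (h : (s.sup : ℤ) - s.card ≤ r + 1) (h' : 0 ≤ s.card + r) : up r (down r s) = s := by
  rw [up, down_erase r s h, down_sup r s h]
  have : (((s.card + r).toNat : ℕ) - r : ℤ).toNat = s.card := by omega
  rw [this]
  exact ms_split s hs

theorem card_down (r : ℤ) (s : Multiset ℕ) : (down r s).card ≤ s.card + 1 := by
  refine (Multiset.card_le_card (Multiset.filter_le _ _)).trans ?_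
  rw [Multiset.card_cons]
  refine Nat.add_le_add_right ((Multiset.card_le_card (Multiset.filter_le _ _)).trans ?_) 1
  simp

theorem up_card (r : ℤ) (t : Multiset ℕ) (h : ((t.erase t.sup).card : ℤ) ≤ t.sup - r) :
    ((up r t).card : ℤ) = t.sup - r := by
  rw [up, Multiset.card_add, Multiset.card_map, Multiset.card_replicate]
  omega

theorem erase_sum (t : Multiset ℕ) : (t.erase t.sup).sum + t.sup = t.sum := by
  by_cases h : t = 0
  · subst h; simp
  · conv_rhs => rw [← Multiset.cons_erase (sup_mem h), Multiset.sum_cons]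
    rw [add_comm]

theorem up_sum (r : ℤ) (t : Multiset ℕ) (h : ((t.erase t.sup).card : ℤ) ≤ t.sup - r) :
    ((up r t).sum : ℤ) = t.sum - r := by
  have := erase_sum t
  rw [up, Multiset.sum_add, sum_map_succ, Multiset.sum_replicate]
  simp only [smul_eq_mul, mul_one]
  omega

theorem up_pos (r : ℤ) (t : Multiset ℕ) : ∀ x ∈ up r t, 0 < x := by
  intro x hx
  rw [up, Multiset.mem_add, Multiset.mem_map] at hx
  obtain ⟨y, -, rfl⟩ | hx := hx
  · omega
  · rw [Multiset.eq_of_mem_replicate hx]; omega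

theorem up_sup (r : ℤ) (t : Multiset ℕ) : (up r t).sup ≤ t.sup + 1 := by
  refine Multiset.sup_le.2 fun x hx => ?_
  rw [up, Multiset.mem_add, Multiset.mem_map] at hx
  obtain ⟨y, hy, rfl⟩ | hx := hx
  · have := Multiset.le_sup (Multiset.mem_of_mem_erase hy); omega
  · rw [Multiset.eq_of_mem_replicate hx]; omega

theorem down_up (r : ℤ) (t : Multiset ℕ) (ht : ∀ x ∈ t, 0 < x)
    (h : ((t.erase t.sup).card : ℤ) ≤ t.sup - r) : down r (up r t) = t := by
  have hc := up_card r t h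
  have e : ((up r t).card + r : ℤ).toNat = t.sup := by omega
  have e2 : ((up r t).map (· - 1)).filter (0 < ·) = t.erase t.sup := by
    rw [up, Multiset.map_add, Multiset.filter_add, Multiset.map_map, Multiset.map_replicate]
    have : (Multiset.replicate ((t.sup - r : ℤ).toNat - (t.erase t.sup).card) (1 - 1)).filter
        (0 < ·) = 0 := by
      rw [Multiset.filter_eq_nil]
      intro x hx; rw [Multiset.eq_of_mem_replicate hx]; omega
    rw [this, add_zero]
    simp only [Function.comp_def, Nat.add_sub_cancel, Multiset.map_id']
    rw [Multiset.filter_eq_self]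
    exact fun x hx => ht x (Multiset.mem_of_mem_erase hx)
  rw [down, e, e2, cons_erase_sup t ht]

/-- The bijection `down r` between the partitions of `n` of rank at most `r + 1` and the partitions
of `n + r` of rank at least `r - 1`. In the excluded case `n = 0`, `r < 0` the new part would be
negative. -/
theorem card_rank_le (n N : ℕ) (r : ℤ) (h : (N : ℤ) = n + r) (hn : 0 < n ∨ 0 ≤ r) :
    Fintype.card {π : n.Partition // π.rank ≤ r + 1} =
      Fintype.card {π : N.Partition // r - 1 ≤ π.rank} := by
  have H1 : ∀ π : n.Partition, π.rank ≤ r + 1 → 0 ≤ (π.parts.card : ℤ) + r := by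
    intro π hπ
    rcases hn with hn | hn
    · have hne : π.parts ≠ 0 := by
        intro h0; have := π.parts_sum; rw [h0] at this; simp at this; omega
      have := π.parts_pos (sup_mem hne)
      unfold Nat.Partition.rank at hπ
      omega
    · positivity
  have H2 : ∀ π : N.Partition, r - 1 ≤ π.rank →
      ((π.parts.erase π.parts.sup).card : ℤ) ≤ π.parts.sup - r := by
    intro π hπ
    unfold Nat.Partition.rank at hπ
    by_cases h0 : π.parts = 0
    · have := π.parts_sum
      rw [h0] at this ⊢
      simp at this ⊢
      omega
    · have h1 := Multiset.card_erase_of_mem (sup_mem h0)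
      have h2 : 0 < π.parts.card := Multiset.card_pos.2 h0
      rw [Nat.pred_eq_sub_one] at h1
      omega
  refine Fintype.card_congr
    { toFun := fun π => ⟨⟨down r π.1.parts, fun hi => (Multiset.mem_filter.1 hi).2, ?_⟩, ?_⟩
      invFun := fun π => ⟨⟨up r π.1.parts, fun hi => up_pos r _ _ hi, ?_⟩, ?_⟩
      left_inv := ?_
      right_inv := ?_ }
  · have := down_sum r π.1.parts (fun _ hx => π.1.parts_pos hx) (H1 _ π.2)
    rw [π.1.parts_sum] at this
    omega
  · have h1 := down_sup r π.1.parts π.2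
    have h2 := card_down r π.1.parts
    have h3 := H1 _ π.2
    simp only [Nat.Partition.rank, h1]
    omega
  · have := up_sum r π.1.parts (H2 _ π.2)
    rw [π.1.parts_sum] at this
    omega
  · have h1 := up_sup r π.1.parts
    have h2 := up_card r π.1.parts (H2 _ π.2)
    simp only [Nat.Partition.rank]
    omega
  · intro π
    exact Subtype.ext (Nat.Partition.ext
      (up_down r π.1.parts (fun _ hx => π.1.parts_pos hx) π.2 (H1 _ π.2)))
  · intro π
    exact Subtype.ext (Nat.Partition.ext
      (down_up r π.1.parts (fun _ hx => π.1.parts_pos hx) (H2 _ π.2)))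

theorem rank_lt {n : ℕ} (hn : 0 < n) (π : n.Partition) : -(n : ℤ) < π.rank ∧ π.rank < n := by
  have hne : π.parts ≠ 0 := by
    intro h0; have := π.parts_sum; rw [h0] at this; simp at this; omega
  have h1 := π.le_of_mem_parts (sup_mem hne)
  have h2 : 0 < π.parts.card := Multiset.card_pos.2 hne
  have h3 := π.parts_pos (sup_mem hne)
  have h4 : π.parts.card ≤ n := by
    have := sum_map_pred π.parts (fun _ hx => π.parts_pos hx)
    rw [π.parts_sum] at this; omega
  unfold Nat.Partition.rank
  omega

/-- The number of partitions of `n` of rank at most `s`. -/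
def rankLe (n : ℕ) (s : ℤ) : ℕ := Fintype.card {π : n.Partition // π.rank ≤ s}

theorem rankLe_le (n : ℕ) (s : ℤ) : rankLe n s ≤ partitionCount n :=
  Fintype.card_subtype_le _

theorem rankLe_of_ge {n : ℕ} {s : ℤ} (h : ∀ π : n.Partition, π.rank ≤ s) :
    rankLe n s = partitionCount n := by
  unfold rankLe partitionCount
  exact Fintype.card_congr (Equiv.subtypeUnivEquiv h)

theorem rankLe_zero {n : ℕ} {s : ℤ} (h : ∀ π : n.Partition, s < π.rank) : rankLe n s = 0 := by
  unfold rankLe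
  rw [Fintype.card_eq_zero_iff]
  exact ⟨fun π => absurd π.2 (not_le.2 (h π.1))⟩

theorem rank_zero (π : Nat.Partition 0) : π.rank = 0 := by simp [Nat.Partition.rank]

/-- The counting form of `card_rank_le`, from which all generating functions are obtained. -/
theorem rankLe_add (n N : ℕ) (r : ℤ) (h : (N : ℤ) = n + r) (hn : 0 < n ∨ 0 ≤ r) :
    rankLe n (r + 1) + rankLe N (r - 2) = partitionCount N := by
  have := Fintype.card_subtype_compl (fun π : N.Partition => π.rank ≤ r - 2)
  have h2 : Fintype.card {π : N.Partition // ¬ π.rank ≤ r - 2} =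
      Fintype.card {π : N.Partition // r - 1 ≤ π.rank} :=
    Fintype.card_congr (Equiv.subtypeEquivRight fun π => by omega)
  have h3 := rankLe_le N (r - 2)
  unfold rankLe partitionCount at *
  rw [card_rank_le n N r h hn]
  omega

theorem rankLe_low {n s : ℕ} (h : n < s + 2) : rankLe n s = partitionCount n := by
  apply rankLe_of_ge
  intro π
  rcases Nat.eq_zero_or_pos n with rfl | hn
  · rw [rank_zero]; positivity
  · have := rank_lt hn π; omega

theorem rankLe_high (n s : ℕ) :
    rankLe n (s + 3 : ℕ) + rankLe (n + (s + 2)) s = partitionCount (n + (s + 2)) := by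
  have := rankLe_add n (n + (s + 2)) (s + 2) (by push_cast; ring) (Or.inr (by positivity))
  convert this using 2
  · push_cast; ring_nf
  · ring_nf

theorem rankLe_neg_low {n t : ℕ} (h : n < t) (ht : 0 < n ∨ 1 < t): rankLe n (1 - t) = 0 := by
  apply rankLe_zero
  intro π
  rcases Nat.eq_zero_or_pos n with rfl | hn
  · rw [rank_zero]; omega
  · have := rank_lt hn π; omega

theorem rankLe_neg_high (n t : ℕ) (ht : 0 < t) :
    rankLe (n + t) (1 - t) + rankLe n (-t - 2) = partitionCount n := by
  have := rankLe_add (n + t) n (-t) (by push_cast; ring) (Or.inl (by omega))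
  convert this using 3
  ring

theorem rankLe_zero_zero : rankLe 0 0 = 1 := by
  rw [rankLe_of_ge fun π => (rank_zero π).le]
  simp [partitionCount]

theorem partitionCount_le (n : ℕ) : partitionCount n ≤ 2 ^ n := by
  have h1 : partitionCount n ≤ Fintype.card (Composition n) :=
    Fintype.card_le_of_surjective _ Nat.Partition.ofComposition_surj
  rw [composition_card] at h1
  exact h1.trans (Nat.pow_le_pow_right (by norm_num) (Nat.sub_le _ _))

theorem rankLe_sub (n : ℕ) (m : ℤ) :
    Fintype.card {π : n.Partition // π.rank = m} + rankLe n (m - 1) = rankLe n m := by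
  have := Fintype.card_subtype_or_disjoint (fun π : n.Partition => π.rank = m)
    (fun π => π.rank ≤ m - 1) (by
      rw [Pi.disjoint_iff]; intro π; simp; omega)
  unfold rankLe
  rw [← this]
  exact Fintype.card_congr (Equiv.subtypeEquivRight fun π => by omega)

/-! ### Generating functions and Euler's pentagonal number theorem -/

noncomputable section

/-- The power series with coefficients `a`. -/
def gs (a : ℕ → ℂ) (q : ℂ) : ℂ := ∑' n, a n * q ^ n

theorem norm_gs_term {a : ℕ → ℂ} (ha : ∀ n, ‖a n‖ ≤ 2 ^ n) (q : ℂ) (n : ℕ) :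
    ‖a n * q ^ n‖ ≤ (2 * ‖q‖) ^ n := by
  rw [norm_mul, norm_pow, mul_pow]
  exact mul_le_mul_of_nonneg_right (ha n) (by positivity)

theorem summable_gs {a : ℕ → ℂ} (ha : ∀ n, ‖a n‖ ≤ 2 ^ n) {q : ℂ} (h : ‖q‖ < 1 / 2) :
    Summable fun n => a n * q ^ n :=
  Summable.of_norm_bounded (summable_geometric_of_lt_one (by positivity) (by linarith))
    (norm_gs_term ha q)

theorem norm_gs_le {a : ℕ → ℂ} (ha : ∀ n, ‖a n‖ ≤ 2 ^ n) {q : ℂ} (h : ‖q‖ < 1 / 2) :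
    ‖gs a q‖ ≤ (1 - 2 * ‖q‖)⁻¹ :=
  tsum_of_norm_bounded (hasSum_geometric_of_lt_one (by positivity) (by linarith))
    (norm_gs_term ha q)

theorem gs_shift {a b : ℕ → ℂ} (ha : ∀ n, ‖a n‖ ≤ 2 ^ n) {q : ℂ} (h : ‖q‖ < 1 / 2) (k : ℕ)
    (h0 : ∀ n < k, a n = 0) (h1 : ∀ n, a (n + k) = b n) : gs a q = q ^ k * gs b q := by
  have := (summable_gs ha h).sum_add_tsum_nat_add k
  rw [Finset.sum_eq_zero (fun n hn => by rw [h0 n (Finset.mem_range.1 hn), zero_mul]),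
    zero_add] at this
  rw [gs, ← this, gs, ← tsum_mul_left]
  exact tsum_congr fun n => by rw [h1, pow_add]; ring

/-- The generating function of the partition numbers. -/
def Pg (q : ℂ) : ℂ := gs (fun n => partitionCount n) q

/-- The generating function of the partitions of rank at most `s`. -/
def Hg (q : ℂ) (s : ℤ) : ℂ := gs (fun n => rankLe n s) q

theorem pc_bd (n : ℕ) : ‖(partitionCount n : ℂ)‖ ≤ 2 ^ n := by
  rw [Complex.norm_natCast]; exact_mod_cast partitionCount_le n

theorem rl_bd (s : ℤ) (n : ℕ) : ‖(rankLe n s : ℂ)‖ ≤ 2 ^ n := by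
  rw [Complex.norm_natCast]; exact_mod_cast (rankLe_le n s).trans (partitionCount_le n)

theorem prl_bd (s : ℤ) (n : ℕ) : ‖(partitionCount n - rankLe n s : ℂ)‖ ≤ 2 ^ n := by
  rw [← Nat.cast_sub (rankLe_le n s), Complex.norm_natCast]
  exact_mod_cast (Nat.sub_le _ _).trans (partitionCount_le n)

theorem Pg_sub_Hg {q : ℂ} (h : ‖q‖ < 1 / 2) (s : ℤ) :
    gs (fun n => partitionCount n - rankLe n s) q = Pg q - Hg q s := by
  rw [Pg, Hg, gs, gs, gs, ← (summable_gs pc_bd h).tsum_sub (summable_gs (rl_bd s) h)]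
  exact tsum_congr fun n => sub_mul _ _ _

theorem Hg_nonneg {q : ℂ} (h : ‖q‖ < 1 / 2) (s : ℕ) :
    Hg q s = Pg q - q ^ (s + 2) * Hg q (s + 3 : ℕ) := by
  have := gs_shift (b := fun n => rankLe n (s + 3 : ℕ)) (prl_bd s) h (s + 2)
    (fun n hn => by rw [rankLe_low hn, sub_self])
    (fun n => by rw [← rankLe_high n s]; push_cast; ring)
  rw [Pg_sub_Hg h] at this
  rw [Hg, Hg] at *
  linear_combination -this

theorem Hg_neg {q : ℂ} (h : ‖q‖ < 1 / 2) (t : ℕ) (ht : 1 < t) :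
    Hg q (1 - t) = q ^ t * (Pg q - Hg q (-t - 2)) := by
  rw [← Pg_sub_Hg h]
  refine gs_shift (rl_bd _) h t (fun n hn => ?_) (fun n => ?_)
  · simp only [rankLe_neg_low hn (Or.inr ht), Nat.cast_zero]
  · simp only [← rankLe_neg_high n t (by omega)]; push_cast; ring

/-- The term `1` accounts for the empty partition, to which `rankLe_add` with `r = -1` does not
apply. -/
theorem Hg_zero {q : ℂ} (h : ‖q‖ < 1 / 2) : Hg q 0 = 1 + q * (Pg q - Hg q (-3)) := by
  have hs := (summable_gs (rl_bd 0) h).sum_add_tsum_nat_add 1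
  rw [← Pg_sub_Hg h, Hg, gs, ← hs, gs, ← tsum_mul_left, Finset.sum_range_one, rankLe_zero_zero]
  congr 1
  · simp
  · refine tsum_congr fun n => ?_
    have := rankLe_neg_high n 1 (by omega)
    norm_num at this
    rw [← this]; push_cast; ring

/-- A bounded solution of a contracting three-step recursion vanishes. -/
theorem contract {f : ℕ → ℂ} {x C : ℝ} (hx0 : 0 ≤ x) (hx : x < 1) (hC : ∀ s, ‖f s‖ ≤ C)
    (h : ∀ s, ‖f s‖ ≤ x * ‖f (s + 3)‖) (s : ℕ) : f s = 0 := by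
  have key : ∀ n s, ‖f s‖ ≤ x ^ n * C := by
    intro n
    induction n with
    | zero => intro s; simpa using hC s
    | succ n ih =>
      intro s
      calc _ ≤ x * ‖f (s + 3)‖ := h s
        _ ≤ x * (x ^ n * C) := by gcongr; exact ih _
        _ = _ := by ring
  have : Filter.Tendsto (fun n : ℕ => x ^ n * C) Filter.atTop (nhds (0 * C)) :=
    (tendsto_pow_atTop_nhds_zero_of_lt_one hx0 hx).mul_const C
  rw [zero_mul] at this
  exact norm_le_zero_iff.1 (ge_of_tendsto' this fun n => key n s)

/-- Sum of `pterm` over nonnegative indices. -/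
def up0 (q : ℂ) (s : ℤ) : ℂ := ∑' k : ℕ, pterm q (fun _ => 1) s k

/-- Minus the sum of `pterm` over negative indices. -/
def dn0 (q : ℂ) (s : ℤ) : ℂ := -∑' k : ℕ, pterm q (fun _ => 1) s (-(k + 1 : ℤ))

theorem summ1 {q : ℂ} (hq : q ≠ 0) (h1 : ‖q‖ < 1) (s : ℤ) :
    Summable fun n => ‖pterm q (fun _ => 1) s n‖ :=
  summable_pterm (a := 1) hq h1 (fun _ => by simp) s

theorem summ_up {q : ℂ} (hq : q ≠ 0) (h1 : ‖q‖ < 1) (s : ℤ) :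
    Summable fun k : ℕ => pterm q (fun _ => 1) s k :=
  (summ1 hq h1 s).of_norm.comp_injective Nat.cast_injective

theorem summ_dn {q : ℂ} (hq : q ≠ 0) (h1 : ‖q‖ < 1) (s : ℤ) :
    Summable fun k : ℕ => pterm q (fun _ => 1) s (-(k + 1 : ℤ)) :=
  (summ1 hq h1 s).of_norm.comp_injective fun a b h => by simpa using h

theorem full_one {q : ℂ} (hq : q ≠ 0) (h1 : ‖q‖ < 1) (s : ℤ) :
    full q (fun _ => 1) s = up0 q s - dn0 q s := by
  rw [full, up0, dn0, sub_neg_eq_add]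
  exact ((summ_up hq h1 s).hasSum.of_nat_of_neg_add_one (summ_dn hq h1 s).hasSum).tsum_eq

theorem pent_succ (k : ℤ) : pent (k + 1) = pent k + 3 * k + 2 := by
  have h1 := two_pent k
  have h2 := two_pent (k + 1)
  linarith

theorem pterm_succ {q : ℂ} (hq : q ≠ 0) (s k : ℤ) :
    pterm q (fun _ => 1) s (k + 1) = -(q ^ (s + 2) * pterm q (fun _ => 1) (s + 3) k) := by
  simp only [pterm, pent_succ]
  rw [zpow_add₀ (by norm_num), show pent k + 3 * k + 2 + s * (k + 1) =
    (s + 2) + (pent k + (s + 3) * k) by ring, zpow_add₀ hq (s + 2)]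
  ring

theorem pterm_zero (q : ℂ) (s : ℤ) : pterm q (fun _ => 1) s 0 = 1 := by
  simp [pterm, pent]

theorem up0_rec {q : ℂ} (hq : q ≠ 0) (h1 : ‖q‖ < 1) (s : ℤ) :
    up0 q s = 1 - q ^ (s + 2) * up0 q (s + 3) := by
  rw [up0, (summ_up hq h1 s).tsum_eq_zero_add, Nat.cast_zero, pterm_zero, up0, ← tsum_mul_left,
    sub_eq_add_neg, ← tsum_neg]
  congr 1
  exact tsum_congr fun k => by push_cast; rw [pterm_succ hq]

theorem dn0_rec {q : ℂ} (hq : q ≠ 0) (h1 : ‖q‖ < 1) (s : ℤ) :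
    dn0 q s = q ^ (1 - s) * (1 - dn0 q (s - 3)) := by
  have e : ∀ k : ℤ, pterm q (fun _ => 1) s k =
      -(q ^ (1 - s) * pterm q (fun _ => 1) (s - 3) (k + 1)) := by
    intro k
    rw [pterm_succ hq, sub_add_cancel, show (1 : ℤ) - s = -(s - 3 + 2) by ring, zpow_neg]
    have := zpow_ne_zero (s - 3 + 2) hq
    field_simp
  rw [dn0, dn0, sub_neg_eq_add]
  have : ∑' k : ℕ, pterm q (fun _ => 1) (s - 3) (-(k + 1 : ℤ) + 1) =
      1 + ∑' k : ℕ, pterm q (fun _ => 1) (s - 3) (-(k + 1 : ℤ)) := by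
    have hs : Summable fun k : ℕ => pterm q (fun _ => 1) (s - 3) (-(k + 1 : ℤ) + 1) :=
      (summ1 hq h1 (s - 3)).of_norm.comp_injective fun a b h => by simpa using h
    rw [hs.tsum_eq_zero_add]
    congr 1
    simp [pterm_zero]
  rw [← this, ← tsum_mul_left, ← tsum_neg]
  exact tsum_congr fun k => by rw [e, neg_neg]

theorem norm_up0_le {q : ℂ} (hq : q ≠ 0) (h1 : ‖q‖ < 1) (s : ℕ) :
    ‖up0 q s‖ ≤ ∑' n, ‖pterm q (fun _ => 1) 0 n‖ := by
  have hs := summ1 hq h1 0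
  have h2 : Summable fun k : ℕ => ‖pterm q (fun _ => 1) 0 k‖ :=
    hs.comp_injective Nat.cast_injective
  refine (tsum_of_norm_bounded h2.hasSum fun k => ?_).trans
    (tsum_comp_le_tsum_of_inj hs (fun _ => norm_nonneg _) Nat.cast_injective)
  simp only [pterm, mul_one, norm_mul, norm_zpow, norm_neg, norm_one, one_zpow, one_mul]
  refine zpow_le_zpow_right_of_le_one₀ (norm_pos_iff.2 hq) h1.le ?_
  nlinarith [Int.natCast_nonneg s, Int.natCast_nonneg k]

theorem norm_dn0_le {q : ℂ} (hq : q ≠ 0) (h1 : ‖q‖ < 1) (s : ℕ) :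
    ‖dn0 q (-s)‖ ≤ ∑' n, ‖pterm q (fun _ => 1) 0 n‖ := by
  have hs := summ1 hq h1 0
  have hi : Function.Injective fun k : ℕ => (-(k + 1 : ℤ)) := fun a b h => by simpa using h
  have h2 : Summable fun k : ℕ => ‖pterm q (fun _ => 1) 0 (-(k + 1 : ℤ))‖ :=
    hs.comp_injective hi
  rw [dn0, norm_neg]
  refine (tsum_of_norm_bounded h2.hasSum fun k => ?_).trans
    (tsum_comp_le_tsum_of_inj hs (fun _ => norm_nonneg _) hi)
  simp only [pterm, mul_one, norm_mul, norm_zpow, norm_neg, norm_one, one_zpow, one_mul]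
  refine zpow_le_zpow_right_of_le_one₀ (norm_pos_iff.2 hq) h1.le ?_
  nlinarith [Int.natCast_nonneg s, Int.natCast_nonneg k]

/-- Both sides satisfy the recursion `f s = P - q ^ (s + 2) f (s + 3)`, and a bounded solution of it
is unique. -/
theorem Hg_eq_up {q : ℂ} (hq : q ≠ 0) (h : ‖q‖ < 1 / 2) (s : ℕ) :
    Hg q s = Pg q * up0 q s := by
  have h1 : ‖q‖ < 1 := by linarith
  refine sub_eq_zero.1 (contract (f := fun s : ℕ => Hg q s - Pg q * up0 q s) (x := ‖q‖)
    (norm_nonneg _) h1 (fun s => (norm_sub_le _ _).trans (add_le_add (norm_gs_le (rl_bd _) h)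
      ((norm_mul_le _ _).trans
        (mul_le_mul_of_nonneg_left (norm_up0_le hq h1 s) (norm_nonneg _))))) (fun s => ?_) s)
  have e : Hg q s - Pg q * up0 q s =
      -(q ^ (s + 2) * (Hg q (s + 3 : ℕ) - Pg q * up0 q (s + 3 : ℕ))) := by
    rw [Hg_nonneg h, up0_rec hq h1]
    have : q ^ ((s : ℤ) + 2) = q ^ (s + 2) := by exact_mod_cast rfl
    push_cast
    rw [this]; ring
  rw [e, norm_neg, norm_mul, norm_pow]
  exact mul_le_mul_of_nonneg_right (pow_le_of_le_one (norm_nonneg _) h1.le (by omega))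
    (norm_nonneg _)

theorem Hg_eq_dn {q : ℂ} (hq : q ≠ 0) (h : ‖q‖ < 1 / 2) (s : ℕ) (hs : 0 < s) :
    Hg q (-s) = Pg q * dn0 q (-s) := by
  have h1 : ‖q‖ < 1 := by linarith
  obtain ⟨s, rfl⟩ := Nat.exists_eq_succ_of_ne_zero hs.ne'
  refine sub_eq_zero.1 (contract
    (f := fun s : ℕ => Hg q (-(s + 1 : ℕ)) - Pg q * dn0 q (-(s + 1 : ℕ))) (x := ‖q‖)
    (norm_nonneg _) h1 (fun s => (norm_sub_le _ _).trans (add_le_add (norm_gs_le (rl_bd _) h)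
      ((norm_mul_le _ _).trans
        (mul_le_mul_of_nonneg_left (norm_dn0_le hq h1 _) (norm_nonneg _))))) (fun s => ?_) s)
  have e : Hg q (-(s + 1 : ℕ)) - Pg q * dn0 q (-(s + 1 : ℕ)) =
      -(q ^ (s + 2) * (Hg q (-(s + 3 + 1 : ℕ)) - Pg q * dn0 q (-(s + 3 + 1 : ℕ)))) := by
    have h2 := Hg_neg h (s + 2) (by omega)
    rw [show (1 : ℤ) - (s + 2 : ℕ) = -(s + 1 : ℕ) by push_cast; ring,
      show -((s + 2 : ℕ) : ℤ) - 2 = -(s + 3 + 1 : ℕ) by push_cast; ring] at h2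
    rw [h2, dn0_rec hq h1, show (1 : ℤ) - -(s + 1 : ℕ) = (s + 2 : ℕ) by push_cast; ring,
      show -((s + 1 : ℕ) : ℤ) - 3 = -(s + 3 + 1 : ℕ) by push_cast; ring, zpow_natCast]
    ring
  simp only [e]
  rw [norm_neg, norm_mul, norm_pow]
  exact mul_le_mul_of_nonneg_right (pow_le_of_le_one (norm_nonneg _) h1.le (by omega))
    (norm_nonneg _)

/-- Euler's pentagonal number theorem: the two expressions for the generating functions of
partitions of bounded rank, for bounds of either sign, have to agree at `0`. -/
theorem Pg_mul_full {q : ℂ} (hq : q ≠ 0) (h : ‖q‖ < 1 / 2) :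
    Pg q * full q (fun _ => 1) 0 = 1 := by
  have h1 : ‖q‖ < 1 := by linarith
  have a := Hg_eq_up hq h 0
  have b := Hg_eq_dn hq h 3 (by norm_num)
  have c := Hg_zero h
  have d := dn0_rec hq h1 0
  norm_num at a b d
  rw [full_one hq h1, d]
  linear_combination -a + c - q * b

end

/-! ### The generating function of a rank class modulo 7 -/

noncomputable section

theorem rank_class_hasSum (n : ℕ) (i : ℤ) :
    HasSum (fun j : ℤ => (rankCount (7 * j + i) n : ℝ))
      (rankCountMod i 7 n) := by
  have h : ∀ π : n.Partition, HasSum (fun j : ℤ => if π.rank = 7 * j + i then (1 : ℝ) else 0)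
      (if π.rank ≡ i [ZMOD (7 : ℕ)] then 1 else 0) := by
    intro π
    by_cases hπ : π.rank ≡ i [ZMOD (7 : ℕ)]
    · obtain ⟨j, hj⟩ := hπ.symm.dvd
      rw [if_pos hπ]
      convert hasSum_ite_eq j (1 : ℝ) using 3 with l
      push_cast at hj
      omega
    · rw [if_neg hπ]
      convert hasSum_zero with j
      rw [if_neg]
      intro h; apply hπ
      rw [h]
      exact (Int.modEq_iff_dvd.2 ⟨-j, by push_cast; ring⟩)
  have := hasSum_sum (s := Finset.univ) fun π _ => h π
  simpa [Finset.sum_boole, Fintype.card_subtype, rankCountMod, rankCount] using this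

theorem rankCountMod_le (i : ℤ) (n : ℕ) : rankCountMod i 7 n ≤ partitionCount n :=
  Fintype.card_subtype_le _

theorem rcm_bd (i : ℤ) (n : ℕ) : ‖(rankCountMod i 7 n : ℂ)‖ ≤ 2 ^ n := by
  rw [Complex.norm_natCast]
  exact_mod_cast (rankCountMod_le i n).trans (partitionCount_le n)

/-- Interchange of an absolutely convergent double series. -/
theorem hasSum_swap {β γ : Type} (f : β → γ → ℂ) (h : Summable fun p : β × γ => f p.1 p.2) :
    HasSum (fun c => ∑' b, f b c) (∑' b, ∑' c, f b c) := by
  have h' : Summable (Function.uncurry f) := h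
  have h1 : Summable fun c => ∑' b, f b c :=
    Summable.prod (f := fun p : γ × β => f p.2 p.1) h'.prod_symm
  rw [← h'.tsum_comm]
  exact h1.hasSum

/-- The generating function of the partitions of rank congruent to `i` modulo `7`. -/
def Rg (q : ℂ) (i : ℤ) : ℂ := gs (fun n => rankCountMod i 7 n) q

theorem gs_rank_eq {q : ℂ} (h : ‖q‖ < 1 / 2) (m : ℤ) :
    gs (fun n => rankCount m n) q = Hg q m - Hg q (m - 1) := by
  rw [Hg, Hg, gs, gs, gs, ← (summable_gs (rl_bd _) h).tsum_sub (summable_gs (rl_bd _) h)]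
  exact tsum_congr fun n => by rw [← rankLe_sub n m, rankCount]; push_cast; ring

/-- A partition has rank `m` when its rank is at most `m` but not at most `m - 1`; sum over
`m = 7 j + i`. -/
theorem Rg_hasSum {q : ℂ} (h : ‖q‖ < 1 / 2) (i : ℤ) :
    HasSum (fun j : ℤ => Hg q (7 * j + i) - Hg q (7 * j + i - 1)) (Rg q i) := by
  have hsum : Summable (fun p : ℕ × ℤ =>
      (rankCount (7 * p.2 + i) p.1 : ℂ) * q ^ p.1) := by
    refine Summable.of_norm ?_
    have e : ∀ p : ℕ × ℤ,
        ‖(rankCount (7 * p.2 + i) p.1 : ℂ) * q ^ p.1‖ =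
        (rankCount (7 * p.2 + i) p.1 : ℝ) * ‖q‖ ^ p.1 := fun p => by
      rw [norm_mul, norm_pow, Complex.norm_natCast]
    simp only [e]
    rw [summable_prod_of_nonneg fun p => by positivity]
    have hh : ∀ n : ℕ, HasSum (fun j : ℤ => (rankCount (7 * j + i) n : ℝ) * ‖q‖ ^ n)
        (rankCountMod i 7 n * ‖q‖ ^ n) := fun n =>
      HasSum.mul_right (‖q‖ ^ n) (rank_class_hasSum n i)
    refine ⟨fun n => (hh n).summable, ?_⟩
    simp only [fun n => (hh n).tsum_eq]
    refine Summable.of_nonneg_of_le (fun n => by positivity) (fun n => ?_)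
      (summable_geometric_of_lt_one (r := 2 * ‖q‖) (by positivity) (by linarith))
    rw [mul_pow]
    gcongr
    exact_mod_cast (rankCountMod_le i n).trans (partitionCount_le n)
  have h1 := hasSum_swap
    (fun (n : ℕ) (j : ℤ) => (rankCount (7 * j + i) n : ℂ) * q ^ n) hsum
  have e1 : ∀ j : ℤ, ∑' n : ℕ, (rankCount (7 * j + i) n : ℂ) * q ^ n =
      Hg q (7 * j + i) - Hg q (7 * j + i - 1) := fun j => gs_rank_eq h _
  have e2 : ∀ n : ℕ, ∑' j : ℤ, (rankCount (7 * j + i) n : ℂ) * q ^ n =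
      rankCountMod i 7 n * q ^ n := fun n => by
    rw [tsum_mul_right]
    have := (Complex.hasSum_ofReal.2 (rank_class_hasSum n i)).tsum_eq
    push_cast at this
    rw [this]
  simp only [e1, e2] at h1
  exact h1

/-- Interchange of a geometric series with an absolutely convergent one. -/
theorem swap_geom {A z : ℕ → ℂ} {ρ : ℝ} (hρ : ρ < 1) (hA : Summable fun k => ‖A k‖)
    (hz : ∀ k, ‖z k‖ ≤ ρ) : HasSum (fun j : ℕ => ∑' k, A k * z k ^ j) (∑' k, A k * (1 -
        z k)⁻¹) := by
  have hρ0 : 0 ≤ ρ := (norm_nonneg _).trans (hz 0)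
  have hs : Summable fun p : ℕ × ℕ => A p.1 * z p.1 ^ p.2 := by
    refine Summable.of_norm_bounded (hA.mul_of_nonneg (summable_geometric_of_lt_one hρ0 hρ)
      (fun _ => norm_nonneg _) (fun _ => by positivity)) fun p => ?_
    rw [norm_mul, norm_pow]
    gcongr
    exact hz _
  convert hasSum_swap (fun k j : ℕ => A k * z k ^ j) hs using 1
  exact tsum_congr fun k => by
    rw [tsum_mul_left, tsum_geometric_of_norm_lt_one ((hz k).trans_lt hρ)]

theorem pterm_shift {q : ℂ} (hq : q ≠ 0) (i j k : ℤ) :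
    pterm q (fun _ => 1) (7 * j + i) k = pterm q (fun _ => 1) i k * (q ^ 7) ^ (k * j) := by
  simp only [pterm, mul_one]
  rw [← zpow_natCast q 7, ← zpow_mul, mul_assoc, ← zpow_add₀ hq]
  congr 2; push_cast; ring

theorem pow7 {q : ℂ} (hq : q ≠ 0) (h1 : ‖q‖ < 1) : q ^ 7 ≠ 0 ∧ ‖q ^ 7‖ < 1 :=
  ⟨pow_ne_zero _ hq, by rw [norm_pow]; exact pow_lt_one₀ (norm_nonneg _) h1 (by norm_num)⟩

theorem up0_sub {q : ℂ} (hq : q ≠ 0) (h1 : ‖q‖ < 1) (s t : ℤ) : up0 q s - up0 q t =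
    ∑' k : ℕ, (pterm q (fun _ => 1) s (k + 1) - pterm q (fun _ => 1) t (k + 1)) := by
  have hs := summ_up hq h1 s
  have ht := summ_up hq h1 t
  rw [up0, up0, ← hs.tsum_sub ht, (hs.sub ht).tsum_eq_zero_add]
  simp only [Nat.cast_zero, pterm_zero, sub_self, zero_add, Nat.cast_add, Nat.cast_one]

theorem dn0_sub {q : ℂ} (hq : q ≠ 0) (h1 : ‖q‖ < 1) (s t : ℤ) : dn0 q s - dn0 q t =
    ∑' k : ℕ, -(pterm q (fun _ => 1) s (-(k + 1 : ℤ)) - pterm q (fun _ => 1) t (-(k + 1 : ℤ))) := by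
  rw [dn0, dn0, tsum_neg, (summ_dn hq h1 s).tsum_sub (summ_dn hq h1 t)]
  ring

/-- The generating function of a rank class. Summing the geometric series over `j` in `Rg_hasSum`
produces the denominators `1 - q ^ (7 n)`. Negative `j` use the other half of the pentagonal series,
and the term `n = 0`, the same for every rank bound, cancels. -/
theorem Rg_eq {q : ℂ} (hq : q ≠ 0) (h : ‖q‖ < 1 / 2) (i : ℤ) (hi : 1 ≤ i) (hi6 : i ≤ 6) :
    Rg q i = Pg q * (full q (geo (q ^ 7)) i - full q (geo (q ^ 7)) (i - 1)) := by
  have h1 : ‖q‖ < 1 := by linarith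
  obtain ⟨hQ, hQ1⟩ := pow7 hq h1
  set Q := q ^ 7 with hQd
  set D : ℤ → ℂ := fun k => pterm q (fun _ => 1) i k - pterm q (fun _ => 1) (i - 1) k with hD
  have hDs : Summable fun k => ‖D k‖ := by
    refine Summable.of_nonneg_of_le (fun _ => norm_nonneg _) (fun k => norm_sub_le _ _)
      ((summ1 hq h1 i).add (summ1 hq h1 (i - 1)))
  have ip : Function.Injective fun k : ℕ => (k + 1 : ℤ) := fun a b h => by simpa using h
  have im : Function.Injective fun k : ℕ => (-(k + 1 : ℤ)) := fun a b h => by simpa using h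
  have hz : ∀ k : ℕ, ‖Q ^ (k + 1)‖ ≤ ‖Q‖ := fun k => by
    rw [norm_pow]; exact pow_le_of_le_one (norm_nonneg _) hQ1.le (by omega)
  have hp := swap_geom hQ1 (hDs.comp_injective ip) hz
  have hn := swap_geom (A := fun k : ℕ => -(D (-(k + 1 : ℤ)) * Q ^ (k + 1))) hQ1
    (Summable.of_nonneg_of_le (fun _ => norm_nonneg _) (fun k => by
      rw [norm_neg, norm_mul]
      exact mul_le_of_le_one_right (norm_nonneg _) ((hz k).trans hQ1.le))
      (hDs.comp_injective im)) hz
  -- the terms of the series for `Rg` over nonnegative `j`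
  have ep : ∀ j : ℕ, Hg q (7 * j + i) - Hg q (7 * j + i - 1) =
      Pg q * ∑' k : ℕ, D (k + 1) * (Q ^ (k + 1)) ^ j := by
    intro j
    obtain ⟨a, ha⟩ := Int.eq_ofNat_of_zero_le (show 0 ≤ 7 * (j : ℤ) + i by omega)
    obtain ⟨b, hb⟩ := Int.eq_ofNat_of_zero_le (show 0 ≤ 7 * (j : ℤ) + i - 1 by omega)
    rw [ha, show ((a : ℤ) - 1) = b by omega, Hg_eq_up hq h, Hg_eq_up hq h, ← mul_sub, ← hb, ← ha,
      up0_sub hq h1]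
    congr 1
    refine tsum_congr fun k => ?_
    have e : Q ^ ((k + 1 : ℤ) * j) = (Q ^ (k + 1)) ^ j := by
      rw [zpow_mul, zpow_natCast]; norm_cast
    rw [add_sub_assoc, pterm_shift hq, pterm_shift hq, ← sub_mul, ← hQd, e]
  -- the terms over negative `j`
  have en : ∀ j : ℕ, Hg q (7 * (-(j + 1 : ℤ)) + i) - Hg q (7 * (-(j + 1 : ℤ)) + i - 1) =
      Pg q * ∑' k : ℕ, -(D (-(k + 1 : ℤ)) * Q ^ (k + 1)) * (Q ^ (k + 1)) ^ j := by
    intro j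
    obtain ⟨a, ha⟩ := Int.eq_ofNat_of_zero_le (show 0 ≤ -(7 * (-(j + 1 : ℤ)) + i) by omega)
    obtain ⟨b, hb⟩ := Int.eq_ofNat_of_zero_le (show 0 ≤ -(7 * (-(j + 1 : ℤ)) + i - 1) by omega)
    rw [show 7 * (-(j + 1 : ℤ)) + i = -(a : ℤ) by omega, show -(a : ℤ) - 1 = -(b : ℤ) by omega,
      Hg_eq_dn hq h a (by omega), Hg_eq_dn hq h b (by omega), ← mul_sub,
      show -(a : ℤ) = 7 * (-(j + 1 : ℤ)) + i by omega,
      show -(b : ℤ) = 7 * (-(j + 1 : ℤ)) + (i - 1) by omega,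
      dn0_sub hq h1]
    congr 1
    refine tsum_congr fun k => ?_
    have e : Q ^ (-(k + 1 : ℤ) * -(j + 1 : ℤ)) = Q ^ (k + 1) * (Q ^ (k + 1)) ^ j := by
      rw [← pow_succ', ← pow_mul, ← zpow_natCast]; push_cast; ring_nf
    rw [pterm_shift hq, pterm_shift hq, ← sub_mul, ← hQd, e]
    ring
  have hR := (Rg_hasSum h i).unique (HasSum.of_nat_of_neg_add_one
    (f := fun j : ℤ => Hg q (7 * j + i) - Hg q (7 * j + i - 1))
    (by simpa only [ep] using hp.mul_left (Pg q)) (by simpa only [en] using hn.mul_left (Pg q)))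
  rw [hR, ← mul_add]
  congr 1
  have hg : ∀ s, Summable (pterm q (geo Q) s) := fun s =>
    (summable_pterm hq h1 (norm_geo_le hQ hQ1) s).of_norm
  rw [full, full, ← (hg i).tsum_sub (hg (i - 1))]
  have hDg : ∀ n, pterm q (geo Q) i n - pterm q (geo Q) (i - 1) n = D n * geo Q n := fun n => by
    simp only [hD, pterm]; ring
  have hsD := (hg i).sub (hg (i - 1))
  simp only [hDg] at hsD ⊢
  have s1 : Summable fun k : ℕ => D k * geo Q k := hsD.comp_injective Nat.cast_injective
  have s2 : Summable fun k : ℕ => D (-(k + 1 : ℤ)) * geo Q (-(k + 1 : ℤ)) := hsD.comp_injective im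
  have hs := HasSum.of_nat_of_neg_add_one (f := fun n : ℤ => D n * geo Q n) s1.hasSum s2.hasSum
  rw [hs.tsum_eq, s1.tsum_eq_zero_add]
  simp only [Nat.cast_zero, geo_zero, mul_zero, zero_add]
  refine congrArg₂ (· + ·) (tsum_congr fun k => ?_) (tsum_congr fun k => ?_)
  · simp only [geo]
    rw [← zpow_natCast]
    push_cast
    ring
  · rw [geo_neg hQ hQ1]
    simp only [geo]
    rw [← zpow_natCast]
    push_cast
    ring

/-- The reflection `n ↦ -n`. It also shows that the series with `b = 3` vanishes. -/
theorem full_antisymm {q : ℂ} (hq : q ≠ 0) (h1 : ‖q‖ < 1) (b : ℤ) :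
    full q (geo (q ^ 7)) (6 - b) = -full q (geo (q ^ 7)) b := by
  obtain ⟨hQ, hQ1⟩ := pow7 hq h1
  rw [full, full, ← tsum_neg, ← (Equiv.neg ℤ).tsum_eq]
  refine tsum_congr fun n => ?_
  simp only [pterm, Equiv.neg_apply, geo_neg hQ hQ1]
  rw [← zpow_natCast q 7, ← zpow_mul]
  have e : pent (-n) + (6 - b) * -n = pent n + b * n - (7 : ℕ) * n := by
    have h1 := two_pent n
    have h2 := two_pent (-n)
    push_cast
    linarith
  have e2 : ((-1 : ℂ)) ^ (-n) = (-1) ^ n := by rw [zpow_neg, ← inv_zpow]; norm_num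
  rw [e, e2, zpow_sub₀ hq]
  have := zpow_ne_zero ((7 : ℕ) * n) hq
  field_simp

end

/-! ### Nonvanishing of the denominators -/

noncomputable section

/-- A bilateral series whose terms tend to `[n = 0]` at a uniformly summable linear rate in `‖Q‖`
does not vanish for small `Q`. -/
theorem near_one (f : ℂ → ℤ → ℂ)
    (h : ∀ Q ≠ 0, ‖Q‖ < 1 / 2 → ∀ n,
      ‖f Q n - if n = 0 then 1 else 0‖ ≤ 4 * ‖Q‖ * (1 / 2) ^ |n|) :
    ∃ δ > 0, ∀ Q ≠ 0, ‖Q‖ < δ → ∑' n, f Q n ≠ 0 := by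
  have hs : Summable fun n : ℤ => (1 / 2 : ℝ) ^ |n| :=
    summable_zpow_of_le (by norm_num) (by norm_num) _ 0 (fun n => by simp)
  set S := ∑' n : ℤ, (1 / 2 : ℝ) ^ |n| with hS
  have hS0 : 0 ≤ S := tsum_nonneg fun n => by positivity
  refine ⟨min (1 / 2) (4 * S + 1)⁻¹, by positivity, fun Q h0 hQ => ?_⟩
  have hQ1 := hQ.trans_le (min_le_left _ _)
  have hQ2 := hQ.trans_le (min_le_right _ _)
  have hb := h Q h0 hQ1
  have hsd : Summable fun n : ℤ => f Q n - if n = 0 then 1 else 0 :=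
    Summable.of_norm_bounded (hs.mul_left _) hb
  have hd : HasSum (fun n : ℤ => if n = 0 then (1 : ℂ) else 0) 1 := hasSum_ite_eq 0 1
  have hn : ‖∑' n : ℤ, (f Q n - if n = 0 then 1 else 0)‖ ≤ 4 * ‖Q‖ * S :=
    tsum_of_norm_bounded (hs.hasSum.mul_left _) hb
  have hsum := (hsd.hasSum.add hd).tsum_eq
  simp only [sub_add_cancel] at hsum
  rw [hsum]
  intro hz
  rw [eq_neg_of_add_eq_zero_left hz, norm_neg, norm_one] at hn
  have : ‖Q‖ * (4 * S + 1) < 1 := by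
    rwa [lt_inv_comm₀ (norm_pos_iff.2 h0) (by positivity), ← one_div,
      lt_div_iff₀ (norm_pos_iff.2 h0), mul_comm] at hQ2
  linarith [norm_nonneg Q]

theorem zpow_small {x : ℝ} (h0 : 0 < x) (h1 : x < 1 / 2) {e n : ℤ} (h : |n| + 1 ≤ e) :
    x ^ e ≤ x * (1 / 2) ^ |n| := by
  calc x ^ e ≤ x ^ (|n| + 1) := zpow_le_zpow_right_of_le_one₀ h0 (by linarith) h
    _ = x * x ^ |n| := by rw [zpow_add₀ h0.ne', zpow_one, mul_comm]
    _ ≤ _ := mul_le_mul_of_nonneg_left (zpow_le_zpow_left₀ (abs_nonneg n) h0.le h1.le) h0.le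

/-- As `Q → 0` only the term `n = 0` survives, because `1 ≤ r ≤ 6`. -/
theorem lam_ne_zero {r : ℤ} (hr : 1 ≤ r) (hr' : r ≤ 6) :
    ∃ δ > 0, ∀ Q ≠ 0, ‖Q‖ < δ → lam Q r ≠ 0 := by
  refine near_one (fun Q n => th Q n * geo Q (7 * n + r)) fun Q h0 hQ n => ?_
  have hp := norm_pos_iff.2 h0
  have h1 : ‖Q‖ < 1 := by linarith
  have hg : ∀ k, ‖geo Q k‖ ≤ 2 := fun k => (norm_geo_le h0 h1 k).trans <| by
    rw [inv_le_comm₀ (by linarith) (by norm_num)]; linarith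
  have hz : ∀ k : ℤ, 1 ≤ k → ‖Q ^ k‖ ≤ ‖Q‖ := fun k hk => by
    rw [norm_zpow]
    simpa using zpow_le_zpow_right_of_le_one₀ hp h1.le hk
  by_cases hn : n = 0
  · subst hn
    have : geo Q r - 1 = Q ^ r * geo Q r := by
      have := one_sub_zpow_ne_zero h0 h1 (k := r) (by omega)
      rw [geo]; field_simp; ring
    simp only [th, tri, mul_zero, zero_add, zpow_zero, one_mul, if_true, Int.zero_ediv,
      abs_zero, mul_one, this, norm_mul]
    nlinarith [hz r hr, hg r, norm_nonneg (geo Q r), norm_nonneg (Q ^ r)]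
  by_cases hn' : n = -1
  · subst hn'
    have ht : th Q (-1) = -1 := by simp [th, tri]
    have : geo Q (7 * -1 + r) = -(Q ^ (7 - r) * geo Q (7 - r)) := by
      rw [← geo_neg h0 h1]; congr 1; ring
    simp only [ht, this, if_neg hn, sub_zero, norm_mul, norm_neg, norm_one, one_mul, abs_neg,
      abs_one, zpow_one]
    nlinarith [hz (7 - r) (by omega), hg (7 - r), norm_nonneg (geo Q (7 - r)),
      norm_nonneg (Q ^ (7 - r))]
  have hth : ‖th Q n‖ ≤ ‖Q‖ * (1 / 2) ^ |n| := by
    rw [th, norm_mul, norm_neg_one_zpow, one_mul, norm_zpow]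
    apply zpow_small hp hQ
    have := two_tri n
    rcases abs_cases n with ⟨h, h'⟩ | ⟨h, h'⟩ <;> rw [h]
    · have : 1 ≤ n := by omega
      nlinarith
    · have : n ≤ -2 := by omega
      nlinarith
  rw [if_neg hn, sub_zero, norm_mul]
  have := hg (7 * n + r)
  nlinarith [norm_nonneg (th Q n), norm_nonneg (geo Q (7 * n + r)),
    mul_pos hp (show (0 : ℝ) < (1 / 2) ^ |n| by positivity)]

theorem app_ne_zero : ∃ δ > 0, ∀ Q ≠ 0, ‖Q‖ < δ → app Q (fun _ => 1) 1 10 ≠ 0 := by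
  refine near_one (fun Q m => (-1) ^ m * Q ^ (21 * tri m + (3 * 1 - 10) * m) * 1)
    fun Q h0 hQ n => ?_
  have hp := norm_pos_iff.2 h0
  by_cases hn : n = 0
  · subst hn
    simp [tri]
  rw [if_neg hn, sub_zero, mul_one, norm_mul, norm_neg_one_zpow, one_mul, norm_zpow]
  have : ‖Q‖ ^ (21 * tri n + (3 * 1 - 10) * n) ≤ ‖Q‖ * (1 / 2) ^ |n| := by
    apply zpow_small hp hQ
    have := two_tri n
    rcases abs_cases n with ⟨h, h'⟩ | ⟨h, h'⟩ <;> rw [h]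
    · have : 1 ≤ n := by omega
      nlinarith
    · have : n ≤ -1 := by omega
      nlinarith
  have h2 := mul_pos hp (show (0 : ℝ) < (1 / 2) ^ |n| by positivity)
  linarith

/-- All denominators occurring in the dissections are nonzero for small `Q`. -/
theorem denominators_ne_zero : ∃ δ > 0, ∀ Q ≠ 0, ‖Q‖ < δ →
    lam Q 1 ≠ 0 ∧ lam Q 2 ≠ 0 ∧ lam Q 3 ≠ 0 ∧ app Q (fun _ => 1) 1 10 ≠ 0 := by
  obtain ⟨a, ha, h1⟩ := lam_ne_zero (r := 1) (by norm_num) (by norm_num)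
  obtain ⟨b, hb, h2⟩ := lam_ne_zero (r := 2) (by norm_num) (by norm_num)
  obtain ⟨c, hc, h3⟩ := lam_ne_zero (r := 3) (by norm_num) (by norm_num)
  obtain ⟨d, hd, h4⟩ := app_ne_zero
  refine ⟨min (min a b) (min c d), by positivity, fun Q h0 hQ => ?_⟩
  simp only [lt_min_iff] at hQ
  exact ⟨h1 Q h0 hQ.1.1, h2 Q h0 hQ.1.2, h3 Q h0 hQ.2.1, h4 Q h0 hQ.2.2⟩

end

/-! ### The missing residue class -/

noncomputable section

/-- On the seventh roots of `Q`, the function `W` is a polynomial without a term of degree `5`.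
The coefficients may depend on `Q`. -/
def Missing (Q : ℂ) (W : ℂ → ℂ) : Prop :=
  ∃ c0 c1 c2 c3 c4 c6 : ℂ, ∀ q, q ^ 7 = Q →
    W q = c0 + c1 * q + c2 * q ^ 2 + c3 * q ^ 3 + c4 * q ^ 4 + c6 * q ^ 6

theorem Missing.lin {Q : ℂ} {W W' : ℂ → ℂ} (h : Missing Q W) (h' : Missing Q W') (a b : ℂ) :
    Missing Q (fun q => a * W q + b * W' q) := by
  obtain ⟨c0, c1, c2, c3, c4, c6, h⟩ := h
  obtain ⟨d0, d1, d2, d3, d4, d6, h'⟩ := h'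
  refine ⟨a * c0 + b * d0, a * c1 + b * d1, a * c2 + b * d2, a * c3 + b * d3, a * c4 + b * d4,
    a * c6 + b * d6, fun q hq => ?_⟩
  simp only [h q hq, h' q hq]
  ring

/-- The rank generating functions `full q (geo (q ^ 7)) b`, up to constants and the Euler product,
have no component with exponents `5` modulo `7`. The case `b = 3` is trivial, and `b < 3` follows by
`full_antisymm`. -/
theorem full_missing {Q : ℂ} (h0 : Q ≠ 0) (h1 : ‖Q‖ < 1) (hX : lam Q 1 ≠ 0) (hY : lam Q 2 ≠ 0)
    (hZ : lam Q 3 ≠ 0) (ha : app Q (fun _ => 1) 1 10 ≠ 0) (b : ℤ) (hb : 0 ≤ b) (hb6 : b ≤ 6) :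
    ∃ W, Missing Q W ∧ ∀ q, q ^ 7 = Q → full q (geo Q) b = (b - 3) / 7 +
      full q (fun _ => 1) 0 * W q := by
  have hq0 : ∀ q : ℂ, q ^ 7 = Q → q ≠ 0 ∧ ‖q‖ < 1 := fun q hq => by
    constructor
    · rintro rfl; simp at hq; exact h0 hq.symm
    · rw [← hq, norm_pow] at h1
      exact (pow_lt_one_iff_of_nonneg (norm_nonneg q) (by norm_num)).1 h1
  have key : ∀ {b : ℤ} {v : ℂ} (W : ℂ → ℂ), Missing Q W → (∀ q, q ^ 7 = Q →
      full q (geo Q) b = v + (lam Q 1 / lam Q 2 - q * lam Q 2 / lam Q 3 - q ^ 2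
        + q ^ 5 * lam Q 3 / lam Q 1) * W q) →
      ∃ W, Missing Q W ∧ ∀ q, q ^ 7 = Q → full q (geo Q) b = v + full q (fun _ => 1) 0 * W q := by
    intro b v W hW h
    refine ⟨_, hW.lin hW (app Q (fun _ => 1) 1 10)⁻¹ 0, fun q hq => ?_⟩
    obtain ⟨hqa, hqb⟩ := hq0 q hq
    subst hq
    rw [h q rfl, (euler_dissect hqa hqb hX hY hZ).1]
    field_simp
    ring
  have anti : ∀ {b : ℤ} {v : ℂ}, (∃ W, Missing Q W ∧ ∀ q, q ^ 7 = Q → full q (geo Q) b = v +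
      full q (fun _ => 1) 0 * W q) → ∃ W, Missing Q W ∧ ∀ q, q ^ 7 = Q →
      full q (geo Q) (6 - b) = -v + full q (fun _ => 1) 0 * W q := by
    rintro b v ⟨W, hW, h⟩
    refine ⟨_, hW.lin hW (-1) 0, fun q hq => ?_⟩
    obtain ⟨hqa, hqb⟩ := hq0 q hq
    subst hq
    rw [full_antisymm hqa hqb, h q rfl]
    ring
  obtain ⟨X, eX⟩ : ∃ X, lam Q 1 = X := ⟨_, rfl⟩
  obtain ⟨Y, eY⟩ : ∃ Y, lam Q 2 = Y := ⟨_, rfl⟩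
  obtain ⟨Z, eZ⟩ : ∃ Z, lam Q 3 = Z := ⟨_, rfl⟩
  simp only [eX, eY, eZ] at key
  have hK : ∀ q, q ^ 7 = Q → X ^ 3 * Z ^ 2 - X ^ 2 * Y ^ 3 - q ^ 7 * Y ^ 2 * Z ^ 3 = 0 := by
    intro q hq
    obtain ⟨hqa, hqb⟩ := hq0 q hq
    subst hq
    rw [← eX, ← eY, ← eZ]
    exact klein_of hqa hqb hX hY hZ ha
  rw [eX] at hX
  rw [eY] at hY
  rw [eZ] at hZ
  have h4 : ∃ W, Missing Q W ∧ ∀ q, q ^ 7 = Q → full q (geo Q) 4 = 1 / 7 +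
      full q (fun _ => 1) 0 * W q := by
    refine key (fun q => -(q ^ 6 * (Q * app Q (geo Q) 2 6)) + (-(X * Y / Z) - q * X -
        2 * q ^ 2 * X * Z / Y - 3 * q ^ 3 * Y + 2 * q ^ 4 * Z - 4 * q ^ 6 * Y * Z / X) / 7)
      ⟨(-(X * Y / Z)) / 7, (-X) / 7, (-(2 * X * Z / Y)) / 7, (-(3 * Y)) / 7, (2 * Z) / 7,
          -(Q * app Q (geo Q) 2 6) + (-(4 * Y * Z / X)) / 7, fun q _ => ?_⟩ fun q hq => ?_
    · ring
    obtain ⟨hqa, hqb⟩ := hq0 q hq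
    have K := hK q hq
    subst hq
    exact full_form4 hqa hqb hX hY hZ eX eY eZ K
  have h5 : ∃ W, Missing Q W ∧ ∀ q, q ^ 7 = Q → full q (geo Q) 5 = 2 / 7 +
      full q (fun _ => 1) 0 * W q := by
    refine key (fun q => -(q ^ 2 * (Q ^ 6 * app Q (geo Q) 4 5)) + (-(2 * X * Y / Z) - 2 * q * X -
        4 * q ^ 2 * X * Z / Y + q ^ 3 * Y - 3 * q ^ 4 * Z - q ^ 6 * Y * Z / X) / 7)
      ⟨(-(2 * X * Y / Z)) / 7, (-(2 * X)) / 7, -(Q ^ 6 * app Q (geo Q) 4 5) +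
          (-(4 * X * Z / Y)) / 7, (Y) / 7, (-(3 * Z)) / 7, (-(Y * Z / X)) / 7,
          fun q _ => ?_⟩ fun q hq => ?_
    · ring
    obtain ⟨hqa, hqb⟩ := hq0 q hq
    have K := hK q hq
    subst hq
    exact full_form5 hqa hqb hX hY hZ eX eY eZ K
  have h6 : ∃ W, Missing Q W ∧ ∀ q, q ^ 7 = Q → full q (geo Q) 6 = 3 / 7 +
      full q (fun _ => 1) 0 * W q := by
    refine key (fun q => Q⁻¹ * app Q (geo Q) (-1) 4 + (4 * X * Y / Z - 3 * q * X +
        q ^ 2 * X * Z / Y - 2 * q ^ 3 * Y - q ^ 4 * Z + 2 * q ^ 6 * Y * Z / X) / 7)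
      ⟨Q⁻¹ * app Q (geo Q) (-1) 4 + (4 * X * Y / Z) / 7, (-(3 * X)) / 7, (X * Z / Y) / 7,
          (-(2 * Y)) / 7, (-Z) / 7, (2 * Y * Z / X) / 7, fun q _ => ?_⟩ fun q hq => ?_
    · ring
    obtain ⟨hqa, hqb⟩ := hq0 q hq
    have K := hK q hq
    subst hq
    exact full_form6 hqa hqb hX hY hZ eX eY eZ K
  have h3 : ∃ W, Missing Q W ∧ ∀ q, q ^ 7 = Q → full q (geo Q) 3 = 0 +
      full q (fun _ => 1) 0 * W q := by
    refine ⟨fun _ => 0, ⟨0, 0, 0, 0, 0, 0, fun q _ => by ring⟩, fun q hq => ?_⟩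
    obtain ⟨hqa, hqb⟩ := hq0 q hq
    subst hq
    have := full_antisymm hqa hqb 3
    norm_num at this
    linear_combination this / 2
  have h0 := anti h6
  have h1 := anti h5
  have h2 := anti h4
  interval_cases b <;> norm_num at * <;> assumption
end

/-! ### Extraction of coefficients -/

noncomputable section

/-- The component of exponents `5` modulo `7` is extracted by averaging over seventh roots of
unity, and it is absent from a `Missing` function. -/
theorem Missing.sum_eq_zero {Q : ℂ} {W : ℂ → ℂ} (h : Missing Q W) {ω : ℂ} (hω : ω ^ 7 = 1)
    (hs : 1 + ω + ω ^ 2 + ω ^ 3 + ω ^ 4 + ω ^ 5 + ω ^ 6 = 0) {q : ℂ} (hq : q ^ 7 = Q) :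
    ∑ j ∈ Finset.range 7, ω ^ (2 * j) * W (ω ^ j * q) = 0 := by
  obtain ⟨c0, c1, c2, c3, c4, c6, h⟩ := h
  have hW : ∀ j : ℕ, W (ω ^ j * q) = _ := fun j => h _ (by
    rw [mul_pow, hq, ← pow_mul, mul_comm j, pow_mul, hω, one_pow, one_mul])
  simp only [hW]
  have hr : ∀ k, k % 7 ≠ 0 → ∑ j ∈ Finset.range 7, ω ^ (k * j) = 0 := by
    intro k hk
    have hk7 : ω ^ k = ω ^ (k % 7) := by
      conv_lhs => rw [← Nat.div_add_mod k 7, pow_add, pow_mul, hω, one_pow, one_mul]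
    simp only [pow_mul, hk7]
    have := Nat.mod_lt k (show 7 > 0 by norm_num)
    have hp : ∀ m, ω ^ (m + 7) = ω ^ m := fun m => by rw [pow_add, hω, mul_one]
    generalize k % 7 = r at *
    simp only [Finset.sum_range_succ, Finset.sum_range_zero, ← pow_mul]
    interval_cases r <;> simp [hp] at * <;> linear_combination hs
  have e : ∀ j : ℕ, ω ^ (2 * j) * (c0 + c1 * (ω ^ j * q) + c2 * (ω ^ j * q) ^ 2 +
      c3 * (ω ^ j * q) ^ 3 + c4 * (ω ^ j * q) ^ 4 + c6 * (ω ^ j * q) ^ 6) =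
      c0 * ω ^ (2 * j) + c1 * q * ω ^ (3 * j) + c2 * q ^ 2 * ω ^ (4 * j) +
      c3 * q ^ 3 * ω ^ (5 * j) + c4 * q ^ 4 * ω ^ (6 * j) + c6 * q ^ 6 * ω ^ (8 * j) := by
    intro j; ring
  simp only [e, Finset.sum_add_distrib, ← Finset.mul_sum]
  rw [hr 2 (by norm_num), hr 3 (by norm_num), hr 4 (by norm_num), hr 5 (by norm_num),
    hr 6 (by norm_num), hr 8 (by norm_num)]
  ring

theorem roots_sum {ω : ℂ} (hω : IsPrimitiveRoot ω 7) (n : ℕ) :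
    ∑ j ∈ Finset.range 7, ω ^ (2 * j) * (ω ^ j) ^ n = if n % 7 = 5 then 7 else 0 := by
  have e : ∀ j : ℕ, ω ^ (2 * j) * (ω ^ j) ^ n = (ω ^ (n + 2)) ^ j := fun j => by
    rw [← pow_mul, ← pow_mul, ← pow_add]; congr 1; ring
  simp only [e]
  split_ifs with h
  · have : ω ^ (n + 2) = 1 := (hω.pow_eq_one_iff_dvd _).2 (by omega)
    simp [this]
  · have h1 : ω ^ (n + 2) ≠ 1 := fun h' => by
      have := (hω.pow_eq_one_iff_dvd _).1 h'
      omega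
    have h7 : (ω ^ (n + 2)) ^ 7 = 1 := by rw [← pow_mul, mul_comm, pow_mul, hω.pow_eq_one, one_pow]
    rw [geom_sum_eq h1, h7, sub_self, zero_div]

/-- Averaging over the seventh roots of unity keeps the exponents `5` modulo `7`: since `2 + 5 = 7`,
the weight is `ω ^ (2 j)`. -/
theorem gs_sum_roots {ω : ℂ} (hω : IsPrimitiveRoot ω 7) {a : ℕ → ℂ} (ha : ∀ n, ‖a n‖ ≤ 2 ^ n)
    {q : ℂ} (h : ‖q‖ < 1 / 2) : ∑ j ∈ Finset.range 7, ω ^ (2 * j) * gs a (ω ^ j * q) =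
      7 * gs (fun n => if n % 7 = 5 then a n else 0) q := by
  have hn : ∀ j : ℕ, ‖ω ^ j * q‖ < 1 / 2 := fun j => by
    rw [norm_mul, norm_pow, hω.norm'_eq_one (by norm_num), one_pow, one_mul]; exact h
  simp only [gs, ← tsum_mul_left]
  rw [← Summable.tsum_finsetSum fun j _ => (summable_gs ha (hn j)).mul_left _]
  refine tsum_congr fun n => ?_
  have := roots_sum hω n
  calc _ = ∑ j ∈ Finset.range 7, (ω ^ (2 * j) * (ω ^ j) ^ n) * (a n * q ^ n) :=
        Finset.sum_congr rfl fun j _ => by rw [mul_pow]; ring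
    _ = _ := by
        rw [← Finset.sum_mul, this]
        split_ifs <;> simp

/-- A power series vanishing on a punctured neighbourhood of `0` has zero coefficients. The value at
`q = 0` is not covered by the analysis above, hence the hypothesis on `a 0`. -/
theorem gs_unique {a : ℕ → ℂ} (ha : ∀ n, ‖a n‖ ≤ 2 ^ n) (h0 : a 0 = 0) {δ : ℝ} (hδ : 0 < δ)
    (h : ∀ q ≠ 0, ‖q‖ < δ → gs a q = 0) (n : ℕ) : a n = 0 := by
  have hp : HasFPowerSeriesAt (gs a) (FormalMultilinearSeries.ofScalars ℂ a) 0 := by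
    rw [hasFPowerSeriesAt_iff]
    filter_upwards [Metric.ball_mem_nhds (0 : ℂ) (show (0 : ℝ) < 1 / 2 by norm_num)] with z hz
    have := (summable_gs ha (mem_ball_zero_iff.1 hz)).hasSum
    simpa [gs, mul_comm] using this
  have hz : ∀ᶠ z in nhds (0 : ℂ), gs a z = 0 := by
    filter_upwards [Metric.ball_mem_nhds (0 : ℂ) hδ] with z hz
    by_cases h' : z = 0
    · subst h'
      rw [gs]
      refine (tsum_congr fun n => ?_).trans tsum_zero
      cases n <;> simp [h0]
    · exact h z h' (mem_ball_zero_iff.1 hz)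
  have := hp.eq_zero_of_eventually hz
  have h0 : FormalMultilinearSeries.coeff (0 : FormalMultilinearSeries ℂ ℂ ℂ) n = 0 := rfl
  simpa [h0] using congrArg (fun p => FormalMultilinearSeries.coeff p n) this

/-- By `Rg_eq` and `full_missing`, the constants contribute `1 / 7` to `Rg q i / Pg q`, and the rest
is a difference of functions without exponents `5` modulo `7`. -/
theorem rank_class {i : ℤ} (hi : 1 ≤ i) (hi6 : i ≤ 6) (n : ℕ) (hn : n % 7 = 5) :
    7 * rankCountMod i 7 n = partitionCount n := by
  obtain ⟨δ, hδ, hden⟩ := denominators_ne_zero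
  set a : ℕ → ℂ := fun n => rankCountMod i 7 n - partitionCount n / 7 with ha
  have hab : ∀ n, ‖a n‖ ≤ 2 ^ n := by
    intro n
    have h1 : (rankCountMod i 7 n : ℝ) ≤ partitionCount n := by
      exact_mod_cast rankCountMod_le i n
    have h2 : (partitionCount n : ℝ) ≤ 2 ^ n := by exact_mod_cast partitionCount_le n
    have h3 : a n = ((rankCountMod i 7 n - partitionCount n / 7 : ℝ) : ℂ) := by
      rw [ha]; push_cast; rfl
    rw [h3, Complex.norm_real, Real.norm_eq_abs, abs_le]
    have : (0 : ℝ) ≤ rankCountMod i 7 n := Nat.cast_nonneg _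
    constructor <;> linarith [(Nat.cast_nonneg (partitionCount n) : (0 : ℝ) ≤ _)]
  have hag : ∀ q : ℂ, ‖q‖ < 1 / 2 → gs a q = Rg q i - Pg q / 7 := by
    intro q h
    rw [Rg, Pg, gs, gs, gs, ← tsum_div_const,
      ← (summable_gs (rcm_bd i) h).tsum_sub ((summable_gs pc_bd h).div_const 7)]
    exact tsum_congr fun n => by rw [ha]; ring
  obtain ⟨ω, hω⟩ : ∃ ω : ℂ, IsPrimitiveRoot ω 7 :=
    ⟨_, Complex.isPrimitiveRoot_exp 7 (by norm_num)⟩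
  have hs : 1 + ω + ω ^ 2 + ω ^ 3 + ω ^ 4 + ω ^ 5 + ω ^ 6 = 0 := by
    have := hω.geom_sum_eq_zero (by norm_num)
    simpa [Finset.sum_range_succ] using this
  have key := gs_unique (a := fun n => if n % 7 = 5 then a n else 0)
    (fun n => by
      split_ifs
      · exact hab n
      · simp) (by simp) (δ := min δ (1 / 2)) (by positivity) (fun q hq0 hq => by
      have hqδ := hq.trans_le (min_le_left _ _)
      have hq2 := hq.trans_le (min_le_right _ _)
      have hq1 : ‖q‖ < 1 := by linarith
      obtain ⟨hQ0, hQ1⟩ := pow7 hq0 hq1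
      have hQδ : ‖q ^ 7‖ < δ := by
        rw [norm_pow]
        exact (pow_le_of_le_one (norm_nonneg _) hq1.le (by norm_num)).trans_lt hqδ
      obtain ⟨hX, hY, hZ, hA⟩ := hden _ hQ0 hQδ
      obtain ⟨W, hW, hf⟩ := full_missing hQ0 hQ1 hX hY hZ hA i (by omega) hi6
      obtain ⟨W', hW', hf'⟩ := full_missing hQ0 hQ1 hX hY hZ hA (i - 1) (by omega) (by omega)
      have hm := (hW.lin hW' 1 (-1)).sum_eq_zero hω.pow_eq_one hs rfl
      have hsum := gs_sum_roots hω hab hq2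
      rw [Finset.sum_congr rfl (g := fun j => ω ^ (2 * j) * (1 * W (ω ^ j * q) +
        -1 * W' (ω ^ j * q))) fun j _ => ?_, hm] at hsum
      · exact (mul_eq_zero.1 hsum.symm).resolve_left (by norm_num)
      have hω0 : ω ≠ 0 := hω.ne_zero (by norm_num)
      have hj0 : ω ^ j * q ≠ 0 := mul_ne_zero (pow_ne_zero _ hω0) hq0
      have hjn : ‖ω ^ j * q‖ < 1 / 2 := by
        rw [norm_mul, norm_pow, hω.norm'_eq_one (by norm_num), one_pow, one_mul]; exact hq2
      have hj7 : (ω ^ j * q) ^ 7 = q ^ 7 := by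
        rw [mul_pow, ← pow_mul, mul_comm j, pow_mul, hω.pow_eq_one, one_pow, one_mul]
      have hP := Pg_mul_full hj0 hjn
      rw [hag _ hjn, Rg_eq hj0 hjn i hi hi6, hj7, hf _ hj7, hf' _ hj7]
      push_cast
      linear_combination ω ^ (2 * j) * (W (ω ^ j * q) - W' (ω ^ j * q)) * hP) n
  simp only [hn, if_true, ha] at key
  have : (7 * rankCountMod i 7 n : ℂ) = partitionCount n := by linear_combination 7 * key
  exact_mod_cast this

theorem sum_rankCountMod (n : ℕ) :
    ∑ i ∈ Finset.range 7, rankCountMod (i : ℤ) 7 n = partitionCount n := by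
  simp only [rankCountMod, Fintype.card_subtype]
  rw [partitionCount, ← Finset.card_univ, Finset.card_eq_sum_card_fiberwise
    (f := fun π : n.Partition => (π.rank % 7).toNat) (t := Finset.range 7)
    (fun π _ => by
      have := Int.emod_lt_of_pos π.rank (show (0 : ℤ) < 7 by norm_num)
      simp only [Finset.coe_range, Set.mem_Iio]; omega)]
  refine Finset.sum_congr rfl fun i hi => ?_
  rw [Finset.mem_range] at hi
  congr 1
  ext π
  rw [Finset.mem_filter, Finset.mem_filter, Int.ModEq, Nat.cast_ofNat]
  simp only [Finset.mem_univ, true_and]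
  omega

end

theorem dyson_rank_mod_7 (k : ℕ) (m : ℤ) (hm0 : 0 ≤ m) (hm6 : m ≤ 6) :
    rankCountMod m 7 (7 * k + 5) = partitionCount (7 * k + 5) / 7 := by
  have hn : (7 * k + 5) % 7 = 5 := by omega
  have h := fun i (hi : (1 : ℤ) ≤ i) (hi6 : i ≤ 6) => rank_class hi hi6 (7 * k + 5) hn
  -- `rank_class` does not cover `m = 0`, which follows from the other six classes.
  rcases hm0.eq_or_lt with rfl | hm
  · have hs := sum_rankCountMod (7 * k + 5)
    have h1 := h 1 (by norm_num) (by norm_num)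
    have h2 := h 2 (by norm_num) (by norm_num)
    have h3 := h 3 (by norm_num) (by norm_num)
    have h4 := h 4 (by norm_num) (by norm_num)
    have h5 := h 5 (by norm_num) (by norm_num)
    have h6 := h 6 (by norm_num) (by norm_num)
    simp only [Finset.sum_range_succ, Finset.sum_range_zero] at hs
    push_cast at hs
    omega
  · have := h m (by omega) hm6
    omega
end

section
/- For every natural number k ≥ 2, every positive integer q, and every integer m, the number of partitions of k whose crank is congruent to m modulo q equals the number of partitions of k whose crank is congruent to q − m modulo q, i.e. M(m, q, k) = M(q − m, q, k). -/
/-- The Andrews–Garvan crank of a partition `π`: if `π` has no parts equal to 1,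
the crank is the largest part; otherwise, letting `ω` be the number of parts equal
to 1 and `o` the number of parts strictly larger than `ω`, the crank is `o - ω`. -/
def Nat.Partition.crank {n : ℕ} (π : n.Partition) : ℤ :=
  if π.parts.count 1 = 0 then (π.parts.sup : ℤ)
  else ((π.parts.filter (fun x => π.parts.count 1 < x)).card : ℤ) - (π.parts.count 1 : ℤ)

/-- `M m q k`: the number of partitions of `k` whose crank is congruent to `m` mod `q`. -/
def crankCountMod (m : ℤ) (q : ℕ) (k : ℕ) : ℕ :=
  Fintype.card {π : k.Partition // π.crank ≡ m [ZMOD q]}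

namespace CrankSymmetry

open Finset

/-! ### Column lengths and conjugation -/

/-- The number of elements of `s` exceeding `i`: the length of the column with 0-based index `i` in
the Young diagram with row lengths `s`. -/
def colLen (s : Multiset ℕ) (i : ℕ) : ℕ := (s.filter (fun x => i < x)).card

lemma colLen_antitone (s : Multiset ℕ) {i j : ℕ} (h : i ≤ j) : colLen s j ≤ colLen s i :=
  Multiset.card_le_card (Multiset.monotone_filter_right s fun _ hx => lt_of_le_of_lt h hx)

lemma colLen_add (s t : Multiset ℕ) (i : ℕ) : colLen (s + t) i = colLen s i + colLen t i := by
  simp [colLen]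

lemma colLen_cons (a : ℕ) (s : Multiset ℕ) (i : ℕ) :
    colLen (a ::ₘ s) i = (if i < a then 1 else 0) + colLen s i := by
  unfold colLen
  rw [Multiset.filter_cons]
  split_ifs <;> simp [add_comm]

lemma colLen_replicate_one (d i : ℕ) :
    colLen (Multiset.replicate d 1) i = if i = 0 then d else 0 := by
  induction d with
  | zero => simp [colLen]
  | succ d ih => rw [Multiset.replicate_succ, colLen_cons, ih]; split_ifs <;> omega

lemma colLen_pred (s : Multiset ℕ) (i : ℕ) :
    colLen s i = s.count (i + 1) + colLen s (i + 1) := by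
  induction s using Multiset.induction with
  | empty => simp [colLen]
  | cons a s ih =>
    rw [colLen_cons, colLen_cons, ih, Multiset.count_cons]; split_ifs <;> omega

lemma colLen_eq_zero_iff (s : Multiset ℕ) (i : ℕ) : colLen s i = 0 ↔ s.sup ≤ i := by
  simp [colLen, Multiset.sup_le, Multiset.filter_eq_nil]

lemma colLen_zero_of_le {n : ℕ} (π : n.Partition) {i : ℕ} (h : n ≤ i) : colLen π.parts i = 0 := by
  rw [colLen_eq_zero_iff, Multiset.sup_le]
  intro b hb
  exact (Nat.Partition.le_of_mem_parts hb).trans h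

lemma sum_colLen (s : Multiset ℕ) (n : ℕ) (h : ∀ x ∈ s, x ≤ n) :
    ∑ i ∈ range n, colLen s i = s.sum := by
  induction s using Multiset.induction with
  | empty => simp [colLen]
  | cons a s ih =>
    simp only [colLen_cons, sum_add_distrib, Multiset.sum_cons]
    rw [ih fun x hx => h x (Multiset.mem_cons_of_mem hx)]
    congr 1
    have ha : a ≤ n := h a (Multiset.mem_cons_self a s)
    rw [← card_filter, show (range n).filter (fun i => i < a) = range a by ext; simp; omega,
      card_range]

lemma ext_colLen {n : ℕ} {π ν : n.Partition}
    (h : ∀ i, colLen π.parts i = colLen ν.parts i) : π = ν := by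
  ext1
  ext x
  rcases x with _ | x
  · rw [Multiset.count_eq_zero_of_notMem, Multiset.count_eq_zero_of_notMem]
    · exact fun h => lt_irrefl _ (ν.parts_pos h)
    · exact fun h => lt_irrefl _ (π.parts_pos h)
  · have h1 := colLen_pred π.parts x
    have h2 := colLen_pred ν.parts x
    have := h x
    have := h (x + 1)
    omega

/-- The conjugate partition: its parts are the nonzero column lengths. Columns of index `n` or more
are empty, and `Nat.Partition.ofSums` discards the zeros. -/
def conj {n : ℕ} (π : n.Partition) : n.Partition :=
  Nat.Partition.ofSums n ((range n).val.map (colLen π.parts)) <| by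
    have := sum_colLen π.parts n fun x hx => Nat.Partition.le_of_mem_parts hx
    rw [π.parts_sum] at this
    exact this

/-- The cell `(i, j)` lies in the diagram of the conjugate iff `(j, i)` lies in the original one. -/
lemma lt_colLen_conj {n : ℕ} (π : n.Partition) (i j : ℕ) :
    i < colLen (conj π).parts j ↔ j < colLen π.parts i := by
  have key : colLen (conj π).parts j = #{i ∈ range n | j < colLen π.parts i} := by
    simp only [conj, colLen, Nat.Partition.ofSums, Multiset.filter_filter, Multiset.filter_map,
      Multiset.card_map, Finset.card_def]
    congr 1
    apply Multiset.filter_congr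
    intro x _
    simp only [Function.comp, colLen]
    omega
  rw [key]
  constructor
  · intro h
    by_contra hc
    have : #{i ∈ range n | j < colLen π.parts i} ≤ #(range i) := by
      apply card_le_card
      intro x hx
      simp only [mem_filter, mem_range] at hx ⊢
      by_contra hx'
      have := colLen_antitone π.parts (not_lt.mp hx')
      omega
    rw [card_range] at this
    omega
  · intro h
    have : #(range (i + 1)) ≤ #{i ∈ range n | j < colLen π.parts i} := by
      apply card_le_card
      intro x hx
      simp only [mem_filter, mem_range] at hx ⊢
      have := colLen_antitone π.parts (Nat.le_of_lt_succ hx)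
      refine ⟨?_, by omega⟩
      by_contra hx'
      have := colLen_zero_of_le π (not_lt.mp hx')
      omega
    rw [card_range] at this
    omega

lemma conj_conj {n : ℕ} (π : n.Partition) : conj (conj π) = π :=
  ext_colLen fun i => eq_of_forall_lt_iff fun j => by rw [lt_colLen_conj, lt_colLen_conj]

lemma card_filter_conj {n : ℕ} (p r : n.Partition → Prop) [DecidablePred p] [DecidablePred r]
    (h : ∀ π, p π ↔ r (conj π)) : #{π : n.Partition | p π} = #{π : n.Partition | r π} := by
  refine card_nbij' conj conj ?_ ?_ ?_ ?_
  · intro π; simp [h π]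
  · intro π; simp [h (conj π), conj_conj]
  · intro π _; exact conj_conj π
  · intro π _; exact conj_conj π

/-- By conjugation, bounding the largest part is equivalent, for counting, to bounding the number
of parts. -/
lemma card_sup_le (n k : ℕ) :
    #{π : n.Partition | π.parts.sup ≤ k} = #{π : n.Partition | colLen π.parts 0 ≤ k} := by
  refine card_filter_conj _ _ fun π => ?_
  rw [← colLen_eq_zero_iff]
  have := lt_colLen_conj π k 0
  omega

/-! ### Dyson's rank-set -/

/-- Some column length exceeds its own (0-based) index by exactly `m`. In terms of Dyson's rank-set
`{j - π_{j+1} : j ≥ 0}` of a partition `π`, this says that `m - 1` does *not* belong to it: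
the lattice path bounding the Young diagram crosses each diagonal either by a horizontal or by a
vertical step. -/
def Meets (m : ℤ) (s : Multiset ℕ) : Prop := ∃ i : ℕ, (colLen s i : ℤ) = i + m

lemma meets_conj {n : ℕ} (m : ℤ) (π : n.Partition) :
    ¬ Meets m π.parts ↔ Meets (1 - m) (conj π).parts := by
  constructor
  · intro h
    have hex : ∃ i : ℕ, (colLen π.parts i : ℤ) ≤ i + m :=
      ⟨n + m.natAbs, by rw [colLen_zero_of_le π (by omega)]; rw [Nat.cast_add, Int.natCast_natAbs]; push_cast; have := neg_abs_le m; omega⟩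
    classical
    obtain ⟨hd, hmin⟩ := (Nat.find_eq_iff hex).mp rfl
    set d := Nat.find hex with hd0
    have hne : (colLen π.parts d : ℤ) ≠ d + m := fun h' => h ⟨d, h'⟩
    -- For `d` the first index with `c d < d + m`, row `d + m - 1` of the diagram has length `d`.
    obtain ⟨j, hj⟩ : ∃ j : ℕ, (j : ℤ) = d + m - 1 := ⟨(d + m - 1).toNat, by omega⟩
    refine ⟨j, ?_⟩
    have : colLen (conj π).parts j = d := by
      refine eq_of_forall_lt_iff fun i => ?_
      rw [lt_colLen_conj]
      constructor
      · intro hi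
        by_contra hc
        have := colLen_antitone π.parts (not_lt.mp hc)
        omega
      · intro hi
        have h1 := hmin (d - 1) (by omega)
        have h2 := colLen_antitone π.parts (show i ≤ d - 1 by omega)
        push Not at h1
        have : ((d - 1 : ℕ) : ℤ) = d - 1 := by omega
        omega
    rw [this]; omega
  · rintro ⟨j, hj⟩ ⟨i, hi⟩
    have h1 := lt_colLen_conj π i j
    by_cases hji : j < colLen π.parts i
    · have := h1.mpr hji; omega
    · have : ¬ i < colLen (conj π).parts j := fun h => hji (h1.mp h)
      omega

open Classical in
lemma card_not_meets (n : ℕ) (m : ℤ) :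
    #{π : n.Partition | ¬ Meets m π.parts} = #{π : n.Partition | Meets (1 - m) π.parts} :=
  card_filter_conj _ _ fun π => meets_conj m π

/-! ### Merging ones into a single part -/

/-- Replace the sub-multiset `s` of the parts of `π` by `t`. -/
def swap {n n' : ℕ} (s t : Multiset ℕ) (ht : ∀ x ∈ t, 0 < x) (h : n + t.sum = n' + s.sum)
    (π : n.Partition) (hπ : s ≤ π.parts) : n'.Partition where
  parts := π.parts - s + t
  parts_pos := fun {i} hi => by
    rcases Multiset.mem_add.mp hi with hi | hi
    · exact π.parts_pos (Multiset.mem_of_le (Multiset.sub_le_self _ _) hi)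
    · exact ht i hi
  parts_sum := by
    have h1 : (π.parts - s + s).sum = n := by
      rw [Multiset.sub_add_cancel hπ, π.parts_sum]
    rw [Multiset.sum_add] at h1 ⊢
    omega

lemma card_swap {n n' : ℕ} (s t : Multiset ℕ) (hs : ∀ x ∈ s, 0 < x) (ht : ∀ x ∈ t, 0 < x)
    (h : n + t.sum = n' + s.sum) (p r : Multiset ℕ → Prop) [DecidablePred p] [DecidablePred r]
    (hpr : ∀ ρ, p (ρ + s) ↔ r (ρ + t)) :
    #{π : n.Partition | s ≤ π.parts ∧ p π.parts} =
      #{ν : n'.Partition | t ≤ ν.parts ∧ r ν.parts} := by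
  refine card_bij' (fun π hπ => swap s t ht h π (mem_filter.mp hπ).2.1)
    (fun ν hν => swap t s hs h.symm ν (mem_filter.mp hν).2.1) ?_ ?_ ?_ ?_
  · intro π hπ
    obtain ⟨-, h1, h2⟩ := mem_filter.mp hπ
    refine mem_filter.mpr ⟨mem_univ _, Multiset.le_add_left _ _, ?_⟩
    rw [← Multiset.sub_add_cancel h1] at h2
    exact (hpr _).mp h2
  · intro π hπ
    obtain ⟨-, h1, h2⟩ := mem_filter.mp hπ
    refine mem_filter.mpr ⟨mem_univ _, Multiset.le_add_left _ _, ?_⟩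
    rw [← Multiset.sub_add_cancel h1] at h2
    exact (hpr _).mpr h2
  · intro π hπ
    obtain ⟨-, h1, h2⟩ := mem_filter.mp hπ
    ext1
    simp only [swap, Multiset.add_sub_cancel_right, Multiset.sub_add_cancel h1]
  · intro π hπ
    obtain ⟨-, h1, h2⟩ := mem_filter.mp hπ
    ext1
    simp only [swap, Multiset.add_sub_cancel_right, Multiset.sub_add_cancel h1]

lemma exists_durfee (k : ℤ) {n : ℕ} (π : n.Partition) :
    ∃ i : ℕ, (colLen π.parts i : ℤ) ≤ i + k :=
  ⟨n + k.natAbs, by rw [colLen_zero_of_le π (by omega)]; rw [Nat.cast_add, Int.natCast_natAbs]; push_cast; have := neg_abs_le k; omega⟩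

open Classical in
/-- The least `i` with `colLen π.parts i ≤ i + k`. It is the width of the Durfee rectangle of `π`,
the largest rectangle with `i` columns and `i + k` rows contained in the diagram. -/
noncomputable def durfee (k : ℤ) {n : ℕ} (π : n.Partition) : ℕ := Nat.find (exists_durfee k π)

lemma durfee_le_iff (k : ℤ) {n : ℕ} (π : n.Partition) (i : ℕ) :
    durfee k π ≤ i ↔ (colLen π.parts i : ℤ) ≤ i + k := by
  classical
  constructor
  · intro h
    have h1 := Nat.find_spec (exists_durfee k π)
    have h2 := colLen_antitone π.parts h
    change (colLen π.parts (durfee k π) : ℤ) ≤ durfee k π + k at h1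
    omega
  · intro h
    exact Nat.find_min' (exists_durfee k π) h

lemma durfee_eq_iff (k : ℤ) {n : ℕ} (π : n.Partition) {d : ℕ} (hd : 1 ≤ d) :
    durfee k π = d ↔ (colLen π.parts d : ℤ) ≤ d + k ∧ d + k ≤ colLen π.parts (d - 1) := by
  have h1 := durfee_le_iff k π d
  have h2 := durfee_le_iff k π (d - 1)
  have : ((d - 1 : ℕ) : ℤ) = d - 1 := by omega
  omega

/-- By minimality of `d`, only the column of index `d - 1` can witness `Meets (k + 1)`. -/
lemma meets_iff (k : ℤ) {n : ℕ} (π : n.Partition) {d : ℕ} (hd : 1 ≤ d) (h : durfee k π = d) :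
    Meets (k + 1) π.parts ↔ (colLen π.parts (d - 1) : ℤ) = d + k := by
  constructor
  · rintro ⟨i, hi⟩
    have h1 := durfee_le_iff k π i
    have h2 := durfee_le_iff k π (i + 1)
    have h3 := colLen_antitone π.parts (show i ≤ i + 1 by omega)
    have : d = i + 1 := by push_cast at h2; omega
    subst this
    simp only [Nat.add_sub_cancel]; push_cast; omega
  · intro h'
    exact ⟨d - 1, by omega⟩

open Classical in
/-- Merging `d` ones into one part `d` is a bijection onto the partitions with the same `durfee k`
that do not meet `k + 1`. When `d = 1` merging is the identity, and the claim then needs `k < 0`. -/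
lemma card_fiber (n : ℕ) (k : ℤ) (d : ℕ) (hd : 1 ≤ d) (hdk : 2 ≤ d ∨ k < 0) :
    #{π : n.Partition | durfee k π = d ∧ d ≤ π.parts.count 1} =
      #{π : n.Partition | durfee k π = d ∧ ¬ Meets (k + 1) π.parts} := by
  have key := card_swap (n := n) (n' := n) (Multiset.replicate d 1) {d}
    (fun x hx => by rw [Multiset.eq_of_mem_replicate hx]; exact one_pos)
    (fun x hx => by rw [Multiset.mem_singleton.mp hx]; omega) (by simp)
    (fun s => (colLen s d : ℤ) ≤ d + k ∧ d + k ≤ colLen s (d - 1))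
    (fun s => (colLen s d : ℤ) ≤ d + k ∧ d + k < colLen s (d - 1))
    (fun ρ => by
      rw [← Multiset.cons_zero]
      simp only [colLen_add, colLen_cons, colLen_replicate_one]
      have h0 : ∀ i, colLen 0 i = 0 := fun i => by simp [colLen]
      simp only [h0]
      split_ifs <;> push_cast <;> omega)
  convert key using 2
  · ext π
    simp only [mem_filter, mem_univ, true_and, durfee_eq_iff k π hd, Multiset.le_count_iff_replicate_le]
    tauto
  · ext π
    simp only [mem_filter, mem_univ, true_and, Multiset.singleton_le]
    constructor
    · rintro ⟨h1, h2⟩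
      rw [meets_iff k π hd h1] at h2
      rw [durfee_eq_iff k π hd] at h1
      refine ⟨?_, h1.1, by omega⟩
      have := colLen_pred π.parts (d - 1)
      rw [show d - 1 + 1 = d by omega] at this
      exact Multiset.count_pos.mp (by omega)
    · rintro ⟨-, h1, h2⟩
      have := (durfee_eq_iff k π hd).mpr ⟨h1, h2.le⟩
      refine ⟨this, ?_⟩
      rw [meets_iff k π hd this]
      omega

open Classical in
/-- Sum of `card_fiber` over all `d ≥ b`. -/
lemma card_large (n : ℕ) (k : ℤ) (b : ℕ) (hb : 1 ≤ b) (hbk : 2 ≤ b ∨ k < 0) :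
    #{π : n.Partition | b ≤ durfee k π ∧ durfee k π ≤ π.parts.count 1} =
      #{π : n.Partition | b ≤ durfee k π ∧ ¬ Meets (k + 1) π.parts} := by
  have hm : ∀ T : Finset n.Partition,
      (T : Set n.Partition).MapsTo (durfee k) (univ.image (durfee k (n := n)) : Finset ℕ) :=
    fun T π _ => by simp
  rw [card_eq_sum_card_fiberwise (hm _), card_eq_sum_card_fiberwise (hm _)]
  refine sum_congr rfl fun d _ => ?_
  by_cases hd : b ≤ d
  · have := card_fiber n k d (hb.trans hd) (by omega)
    rw [filter_filter, filter_filter]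
    convert this using 2
    · ext π; simp only [mem_filter, mem_univ, true_and]; omega
    · ext π; simp only [mem_filter, mem_univ, true_and]
      constructor
      · rintro ⟨⟨h1, h2⟩, h3⟩; exact ⟨h3, h2⟩
      · rintro ⟨h1, h2⟩; exact ⟨⟨by omega, h2⟩, h1⟩
  · rw [filter_eq_empty_iff.mpr, filter_eq_empty_iff.mpr]
    · intro π hπ h; rw [mem_filter] at hπ; omega
    · intro π hπ h; rw [mem_filter] at hπ; omega

lemma crank_le_iff {n : ℕ} (k : ℤ) (π : n.Partition) :
    π.crank ≤ k ↔ (1 ≤ π.parts.count 1 ∧ durfee k π ≤ π.parts.count 1) ∨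
      (π.parts.count 1 = 0 ∧ (π.parts.sup : ℤ) ≤ k) := by
  rw [durfee_le_iff]
  unfold Nat.Partition.crank colLen
  split_ifs with h
  · omega
  · omega

/-- Deleting a one and conjugating. For `k = 0` putting a one back would violate the bound on the
largest part, but then both sides vanish because `n ≥ 2`. -/
lemma card_ones (n : ℕ) (hn : 2 ≤ n) (k : ℕ) :
    #{π : n.Partition | 1 ≤ π.parts.count 1 ∧ π.parts.sup ≤ k} =
      #{π : n.Partition | 1 ≤ π.parts.count 1 ∧ colLen π.parts 0 ≤ k + 1} := by
  rcases Nat.eq_zero_or_pos k with rfl | hk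
  · rw [filter_eq_empty_iff.mpr, filter_eq_empty_iff.mpr]
    · rintro π - ⟨h1, h2⟩
      obtain ⟨t, ht⟩ := Multiset.exists_cons_of_mem (Multiset.count_pos.mp h1)
      have h3 := π.parts_sum
      rw [ht, colLen_cons] at h2
      have h4 : t = 0 := by
        rw [← Multiset.card_eq_zero]
        have : t.filter (fun x => 0 < x) = t := Multiset.filter_eq_self.mpr fun x hx =>
          π.parts_pos (ht ▸ Multiset.mem_cons_of_mem hx)
        unfold colLen at h2
        rw [this] at h2
        simp at h2
        simp [h2]
      rw [ht, h4] at h3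
      simp at h3
      omega
    · rintro π - ⟨h1, h2⟩
      have := Multiset.le_sup (Multiset.count_pos.mp h1)
      omega
  · have e1 := card_swap (n := n) (n' := n - 1) {1} 0 (by simp) (by simp) (by simp; omega)
      (fun s => s.sup ≤ k) (fun s => s.sup ≤ k) (fun ρ => by simp; omega)
    have e2 := card_swap (n := n) (n' := n - 1) {1} 0 (by simp) (by simp) (by simp; omega)
      (fun s => colLen s 0 ≤ k + 1) (fun s => colLen s 0 ≤ k) (fun ρ => by
        rw [colLen_add, ← Multiset.cons_zero, colLen_cons]; simp [colLen])
    simp only [Multiset.singleton_le, zero_le, true_and, ← Multiset.one_le_count_iff_mem] at e1 e2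
    rw [e1, e2, card_sup_le]

/-! ### Dyson's theorem and the symmetry of the crank -/

open Classical in
/-- Dyson: the crank is at most `k` as often as `k` belongs to the rank-set. -/
theorem card_crank_le (n : ℕ) (hn : 2 ≤ n) (k : ℤ) :
    #{π : n.Partition | π.crank ≤ k} = #{π : n.Partition | ¬ Meets (k + 1) π.parts} := by
  rcases lt_or_ge k 0 with hk | hk
  · have hd : ∀ π : n.Partition, 1 ≤ durfee k π := fun π => by
      have := durfee_le_iff k π 0
      push_cast at this
      omega
    have := card_large n k 1 le_rfl (Or.inr hk)
    simp only [hd, true_and] at this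
    rw [← this]
    congr 1
    ext π
    have := hd π
    simp only [mem_filter, mem_univ, true_and, crank_le_iff]
    omega
  · lift k to ℕ using hk
    have h0 := card_large n k 2 one_le_two (Or.inl le_rfl)
    have h1 := card_ones n hn k
    have h2 := card_sup_le n k
    -- Given `h0`, `h1`, `h2`, the claim is the sum over `π` of a linear identity between indicators.
    simp only [card_filter] at h0 h1 h2 ⊢
    have hpt : ∀ π : n.Partition,
        (if π.crank ≤ k then 1 else 0)
          + (if 2 ≤ durfee k π ∧ ¬ Meets (k + 1) π.parts then 1 else 0)
          + (if 1 ≤ π.parts.count 1 ∧ π.parts.sup ≤ k then 1 else 0)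
          + (if colLen π.parts 0 ≤ k then 1 else 0) =
        (if ¬ Meets (k + 1) π.parts then 1 else 0)
          + (if 2 ≤ durfee k π ∧ durfee k π ≤ π.parts.count 1 then 1 else 0)
          + (if 1 ≤ π.parts.count 1 ∧ colLen π.parts 0 ≤ k + 1 then 1 else 0)
          + (if π.parts.sup ≤ k then 1 else 0) := fun π => by
      have hd := durfee_le_iff k π 1
      have hc := colLen_pred π.parts 0
      have hS : durfee k π ≤ 1 → (Meets (k + 1) π.parts ↔ colLen π.parts 0 = k + 1) := by
        intro hd1
        constructor
        · rintro ⟨i, hi⟩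
          have h3 := durfee_le_iff k π i
          obtain rfl : i = 0 := by omega
          push_cast at hi; omega
        · intro h'
          exact ⟨0, by push_cast; omega⟩
      simp only [crank_le_iff, Nat.cast_le]
      push_cast at hd
      rw [zero_add] at hc
      by_cases h2d : 2 ≤ durfee k π
      · by_cases hM : Meets (k + 1) π.parts <;>
          simp only [hM, h2d, not_true_eq_false, not_false_eq_true, and_true, and_false, true_and,
            if_true, if_false] <;> split_ifs <;> omega
      · rw [hS (by omega)]
        split_ifs <;> omega
    have hsum := sum_congr (rfl : (univ : Finset n.Partition) = univ) fun π _ => hpt π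
    simp only [sum_add_distrib] at hsum
    omega

theorem card_crank_neg (n : ℕ) (hn : 2 ≤ n) (v : ℤ) :
    #{π : n.Partition | π.crank = v} = #{π : n.Partition | π.crank = -v} := by
  classical
  have hle := card_crank_le n hn
  have hsplit : ∀ w : ℤ, #{π : n.Partition | π.crank ≤ w} =
      #{π : n.Partition | π.crank ≤ w - 1} + #{π : n.Partition | π.crank = w} := fun w => by
    rw [← card_union_of_disjoint]
    · congr 1; ext π; simp only [mem_filter, mem_univ, true_and, mem_union]; omega
    · rw [disjoint_filter]; intros; omega
  have hcompl : ∀ w : ℤ, #{π : n.Partition | ¬ Meets w π.parts} +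
      #{π : n.Partition | ¬ Meets (1 - w) π.parts} = #(univ : Finset n.Partition) := fun w => by
    rw [card_not_meets n w, card_filter_add_card_filter_not]
  have a1 := hsplit v
  have a2 := hsplit (-v)
  rw [hle, hle] at a1 a2
  have b1 := hcompl (v + 1)
  have b2 := hcompl v
  rw [show 1 - (v + 1) = -v - 1 + 1 by ring] at b1
  rw [show 1 - v = -v + 1 by ring] at b2
  rw [show v - 1 + 1 = v by ring] at a1
  omega

end CrankSymmetry

open CrankSymmetry in
theorem crankMod_symmetry (k : ℕ) (hk : 2 ≤ k) (q : ℕ) (hq : 0 < q) (m : ℤ) :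
    crankCountMod m q k = crankCountMod ((q : ℤ) - m) q k := by
  unfold crankCountMod
  rw [Fintype.card_subtype, Fintype.card_subtype]
  -- The multiset of all cranks is invariant under negation.
  have hM : (Finset.univ.val.map fun π : k.Partition => π.crank) =
      Finset.univ.val.map fun π : k.Partition => -π.crank := by
    ext v
    rw [Multiset.count_map, Multiset.count_map]
    have := card_crank_neg k hk v
    rw [Finset.card_def, Finset.card_def, Finset.filter_val, Finset.filter_val] at this
    convert this using 3
    · exact eq_comm
    · omega
  have h := congrArg (Multiset.countP (· ≡ m [ZMOD q])) hM
  rw [Multiset.countP_map, Multiset.countP_map] at h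
  rw [Finset.card_def, Finset.card_def, Finset.filter_val, Finset.filter_val, h]
  congr 1
  apply Multiset.filter_congr
  intro π _
  rw [Int.modEq_iff_dvd, Int.modEq_iff_dvd, ← dvd_neg,
    show (q : ℤ) - m - π.crank = q + -(m - -π.crank) by ring, dvd_add_right (dvd_refl _)]
end
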